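/- arXiv:2112.14711 — 9 statements merged into one kernel-verified Lean document; each statement's English description precedes it below -/
import Mathlib

section
/- An infinite principal ideal domain which has only finitely many prime elements up to associates contains infinitely many units. -/
/-!
Euclid's argument. Let `a ≠ 0` be divisible by every irreducible element; a product of
representatives of the finitely many associate classes will do. Then `1 + x * a` is relatively
prime to `a`, so no irreducible divides it and it is a unit or zero. As `x ↦ 1 + x * a` is
injective, an infinite ring yields infinitely many units.
-/

theorem exists_ne_zero_forall_irreducible_dvd {M : Type*} [CommMonoidWithZero M] [Nontrivial M]
    [NoZeroDivisors M] (hfin : ∃ F : Finset M, ∀ p : M, Irreducible p → ∃ q ∈ F, Associated p q) :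
    ∃ a : M, a ≠ 0 ∧ ∀ p : M, Irreducible p → p ∣ a := by
  classical
  obtain ⟨F, hF⟩ := hfin
  refine ⟨∏ q ∈ F.erase 0, q,
    Finset.prod_ne_zero_iff.2 fun q hq => Finset.ne_of_mem_erase hq, fun p hp => ?_⟩
  obtain ⟨q, hqF, hpq⟩ := hF p hp
  have hq : q ∈ F.erase 0 := Finset.mem_erase.2 ⟨hpq.ne_zero_iff.1 hp.ne_zero, hqF⟩
  exact hpq.dvd.trans (Finset.dvd_prod_of_mem _ hq)

theorem isUnit_of_isRelPrime_of_forall_irreducible_dvd {M : Type*} [CommMonoidWithZero M]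
    [WfDvdMonoid M] {a b : M} (ha : ∀ p : M, Irreducible p → p ∣ a) (hab : IsRelPrime a b)
    (hb : b ≠ 0) : IsUnit b := by
  by_contra hb_unit
  obtain ⟨p, hp, hpb⟩ := WfDvdMonoid.exists_irreducible_factor hb_unit hb
  exact hp.not_isUnit (hab (ha p hp) hpb)

theorem infinite_setOf_isUnit_of_isUnit_one_add_mul {R : Type*} [Ring R] [Infinite R] {a : R}
    (ha : IsRightRegular a) (hunit : ∀ x : R, 1 + x * a ≠ 0 → IsUnit (1 + x * a)) :
    {u : R | IsUnit u}.Infinite := by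
  have hinj : Function.Injective fun x : R => 1 + x * a := (add_right_injective 1).comp ha
  refine ((Set.infinite_range_of_injective hinj).sdiff (Set.finite_singleton 0)).mono ?_
  rintro _ ⟨⟨x, rfl⟩, hx⟩
  exact hunit x hx

theorem stmt4_general {R : Type*} [CommRing R] [IsDomain R] [WfDvdMonoid R] [Infinite R]
    (hfin : ∃ F : Finset R, ∀ p : R, Irreducible p → ∃ q ∈ F, Associated p q) :
    {u : R | IsUnit u}.Infinite := by
  obtain ⟨a, ha_ne, ha_dvd⟩ := exists_ne_zero_forall_irreducible_dvd hfin
  refine infinite_setOf_isUnit_of_isUnit_one_add_mul (IsRegular.of_ne_zero ha_ne).right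
    fun x => isUnit_of_isRelPrime_of_forall_irreducible_dvd ha_dvd ?_
  have hcoprime : IsCoprime a (1 + x * a) := isCoprime_one_right.add_mul_right_right x
  exact hcoprime.isRelPrime

/-- An infinite principal ideal domain which has only finitely many prime
elements up to associates contains infinitely many units. -/
theorem stmt4 {R : Type*} [CommRing R] [IsDomain R] [IsPrincipalIdealRing R] [Infinite R]
    (hfin : ∃ F : Finset R, ∀ p : R, Prime p → ∃ q ∈ F, Associated p q) :
    {u : R | IsUnit u}.Infinite :=
  stmt4_general (by simpa only [irreducible_iff_prime] using hfin)
end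

section
/- Let R be an infinite principal ideal domain with fraction field K, let P ∈ K[X] be a nonconstant totally primitive polynomial, and let E ⊆ R ∖ {0} be a finite set. Then there are infinitely many m ∈ R such that P(m) is coprime in R to every element of E; moreover these m can be chosen so that the corresponding values P(m) are pairwise distinct and pairwise coprime. -/
open Polynomial

/-!
Clearing denominators gives `d ≠ 0` with `x - y ∣ d * (v x - v y)`. This makes `v` `𝔪`-adically
continuous for every maximal ideal `𝔪`, so the Chinese remainder theorem glues points where `v`
avoids each of the finitely many maximal ideals containing a given `a ≠ 0` to a single `m` with
`v m` coprime to `a`. Since `v m` modulo `a` depends only on `m` modulo `d * a`, one such `m` yields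
infinitely many. The fibres of `v` are finite, so the required set can be built greedily, taking
for `a` the product of the elements of `E` and of the values already chosen.
-/

section IntegerValued

variable {R K : Type*} [CommRing R] [CommRing K] [Algebra R K]

lemma exists_sub_dvd_mul_sub_of_algebraMap_eq_eval [IsFractionRing R K] {P : K[X]} {v : R → R}
    (hval : ∀ m, algebraMap R K (v m) = P.eval (algebraMap R K m)) :
    ∃ d ∈ nonZeroDivisors R, ∀ x y, x - y ∣ d * (v x - v y) := by
  obtain ⟨d, hd_mem, hd⟩ := IsLocalization.integerNormalization_spec (nonZeroDivisors R) P
  set Q := IsLocalization.integerNormalization (nonZeroDivisors R) P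
  have eval_Q (x : R) : Q.eval x = d * v x := by
    apply IsFractionRing.injective R K
    rw [map_mul, hval, ← eval_map_apply, hd, Algebra.smul_def, Polynomial.algebraMap_apply,
      eval_mul, eval_C]
  refine ⟨d, hd_mem, fun x y ↦ ?_⟩
  simpa only [eval_Q, ← mul_sub] using sub_dvd_eval_sub x y Q

lemma finite_preimage_singleton_of_algebraMap_eq_eval [IsDomain K] [FaithfulSMul R K]
    {P : K[X]} {v : R → R} (hval : ∀ m, algebraMap R K (v m) = P.eval (algebraMap R K m))
    (hP : 0 < P.natDegree) (c : R) : (v ⁻¹' {c}).Finite := by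
  have hne : P - C (algebraMap R K c) ≠ 0 := fun h ↦ by
    rw [sub_eq_zero.1 h, natDegree_C] at hP
    exact lt_irrefl 0 hP
  refine ((finite_setOfPred_isRoot hne).preimage
    (FaithfulSMul.algebraMap_injective R K).injOn).subset fun m (hm : v m = c) ↦ ?_
  simp [IsRoot, ← hval, hm]

end IntegerValued

lemma isCoprime_of_forall_isMaximal {R : Type*} [CommRing R] {a b : R}
    (h : ∀ 𝔪 : Ideal R, 𝔪.IsMaximal → b ∈ 𝔪 → a ∉ 𝔪) : IsCoprime a b := by
  rw [← Ideal.isCoprime_span_singleton_iff, Ideal.isCoprime_iff_sup_eq]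
  by_contra hne
  obtain ⟨𝔪, h𝔪, hle⟩ := Ideal.exists_le_maximal _ hne
  obtain ⟨ha, hb⟩ := sup_le_iff.1 hle
  exact h 𝔪 h𝔪 ((Ideal.span_singleton_le_iff_mem 𝔪).1 hb)
    ((Ideal.span_singleton_le_iff_mem 𝔪).1 ha)

lemma finite_setOfPred_isMaximal_and_mem {R : Type*} [CommRing R] [IsNoetherianRing R]
    [Ring.DimensionLEOne R] {a : R} (ha : a ≠ 0) :
    {𝔪 : Ideal R | 𝔪.IsMaximal ∧ a ∈ 𝔪}.Finite := by
  refine (Ideal.finite_minimalPrimes_of_isNoetherianRing R (Ideal.span {a})).subset ?_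
  rintro 𝔪 ⟨h𝔪, ha𝔪⟩
  refine ⟨⟨h𝔪.isPrime, (Ideal.span_singleton_le_iff_mem 𝔪).2 ha𝔪⟩, ?_⟩
  rintro 𝔮 ⟨h𝔮, ha𝔮⟩ h𝔮𝔪
  have h𝔮_ne_bot : 𝔮 ≠ ⊥ := by
    rintro rfl
    exact ha ((Ideal.span_singleton_le_iff_mem ⊥).1 ha𝔮)
  exact ((h𝔮.isMaximal h𝔮_ne_bot).eq_of_le h𝔪.ne_top h𝔮𝔪).ge

section SubDvdMulSub

variable {R : Type*} [CommRing R] [IsDomain R] {v : R → R} {d : R}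

lemma dvd_sub_of_mul_dvd_sub (hd : d ≠ 0) (hdv : ∀ x y, x - y ∣ d * (v x - v y)) {a x y : R}
    (h : d * a ∣ x - y) : a ∣ v x - v y :=
  (mul_dvd_mul_iff_left hd).1 (h.trans (hdv x y))

lemma infinite_setOfPred_isCoprime_of_exists [Infinite R] (hd : d ≠ 0)
    (hdv : ∀ x y, x - y ∣ d * (v x - v y)) {a : R} (ha : a ≠ 0)
    (h : ∃ m, IsCoprime (v m) a) : {m | IsCoprime (v m) a}.Infinite := by
  obtain ⟨m, hm⟩ := h
  have hinj : Function.Injective fun t ↦ m + d * a * t :=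
    (add_right_injective m).comp (mul_right_injective₀ (mul_ne_zero hd ha))
  refine (Set.infinite_range_of_injective hinj).mono ?_
  rintro _ ⟨t, rfl⟩
  obtain ⟨c, hc⟩ : a ∣ v (m + d * a * t) - v m :=
    dvd_sub_of_mul_dvd_sub hd hdv ⟨t, add_sub_cancel_left _ _⟩
  simpa only [Set.mem_ofPred_eq, sub_eq_iff_eq_add'.1 hc] using hm.add_mul_left_left c

variable [IsNoetherianRing R]

lemma exists_forall_sub_mem_of_sub_mem_pow (hd : d ≠ 0) (hdv : ∀ x y, x - y ∣ d * (v x - v y))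
    (𝔪 : Ideal R) [h𝔪 : 𝔪.IsMaximal] :
    ∃ k : ℕ, ∀ x y, x - y ∈ 𝔪 ^ k → v x - v y ∈ 𝔪 := by
  obtain ⟨k, hk⟩ : ∃ k : ℕ, d ∉ 𝔪 ^ k := by
    by_contra! hmem
    have : d ∈ ⨅ k : ℕ, 𝔪 ^ k := Ideal.mem_iInf.2 hmem
    rw [Ideal.iInf_pow_eq_bot_of_isDomain 𝔪 h𝔪.ne_top] at this
    exact hd this
  refine ⟨k, fun x y hxy ↦ ?_⟩
  have hmul : (v x - v y) * d ∈ 𝔪 ^ k :=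
    Ideal.mem_of_dvd _ (mul_comm d _ ▸ hdv x y) hxy
  exact (Ideal.IsMaximal.mul_mem_pow 𝔪 hmul).resolve_right hk

lemma exists_forall_notMem_of_forall_exists_notMem (hd : d ≠ 0)
    (hdv : ∀ x y, x - y ∣ d * (v x - v y)) {s : Set (Ideal R)} (hs : s.Finite)
    (hmax : ∀ 𝔪 ∈ s, 𝔪.IsMaximal) (h : ∀ 𝔪 ∈ s, ∃ m, v m ∉ 𝔪) :
    ∃ m, ∀ 𝔪 ∈ s, v m ∉ 𝔪 := by
  have := hs.to_subtype
  have (𝔪 : s) : (𝔪 : Ideal R).IsMaximal := hmax 𝔪 𝔪.2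
  choose k hk using fun 𝔪 : s ↦ exists_forall_sub_mem_of_sub_mem_pow hd hdv (𝔪 : Ideal R)
  choose μ hμ using fun 𝔪 : s ↦ h 𝔪 𝔪.2
  have hcop : Pairwise fun 𝔪 𝔫 : s ↦
      IsCoprime ((𝔪 : Ideal R) ^ k 𝔪) ((𝔫 : Ideal R) ^ k 𝔫) := fun 𝔪 𝔫 hne ↦
    (Ideal.isCoprime_of_isMaximal (Subtype.coe_ne_coe.2 hne)).pow
  obtain ⟨m, hm⟩ := Ideal.exists_forall_sub_mem_ideal hcop μ
  refine ⟨m, fun 𝔪 h𝔪 hvm ↦ hμ ⟨𝔪, h𝔪⟩ ?_⟩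
  exact (Submodule.sub_mem_iff_right 𝔪 hvm).1 (hk ⟨𝔪, h𝔪⟩ _ _ (hm ⟨𝔪, h𝔪⟩))

lemma exists_isCoprime_of_forall_exists_notMem [Ring.DimensionLEOne R] (hd : d ≠ 0)
    (hdv : ∀ x y, x - y ∣ d * (v x - v y))
    (h : ∀ 𝔪 : Ideal R, 𝔪.IsMaximal → 𝔪 ≠ ⊥ → ∃ m, v m ∉ 𝔪) {a : R} (ha : a ≠ 0) :
    ∃ m, IsCoprime (v m) a := by
  obtain ⟨m, hm⟩ := exists_forall_notMem_of_forall_exists_notMem hd hdv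
    (finite_setOfPred_isMaximal_and_mem ha) (fun _ h𝔪 ↦ h𝔪.1)
    (fun 𝔪 h𝔪 ↦ h 𝔪 h𝔪.1 (Submodule.ne_bot_iff 𝔪 |>.2 ⟨a, h𝔪.2, ha⟩))
  exact ⟨m, isCoprime_of_forall_isMaximal fun 𝔪 h𝔪 ha𝔪 ↦ hm 𝔪 ⟨h𝔪, ha𝔪⟩⟩

end SubDvdMulSub

section Selection

variable {α R : Type*} [CommSemiring R] [NoZeroDivisors R] [Nontrivial R] {v : α → R}

lemma exists_forall_isCoprime_and_notMem (hfib : ∀ c, (v ⁻¹' {c}).Finite)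
    (hinf : ∀ a ≠ 0, {m | IsCoprime (v m) a}.Infinite) {E : Finset R} (hE : 0 ∉ E)
    (F : Finset R) : ∃ m, (∀ e ∈ E, IsCoprime (v m) e) ∧ v m ∉ F := by
  have hprod : ∏ e ∈ E, e ≠ 0 := Finset.prod_ne_zero_iff.2 fun e he h ↦ hE (h ▸ he)
  have hF : (v ⁻¹' F).Finite := F.finite_toSet.preimage' fun c _ ↦ hfib c
  obtain ⟨m, hm, hmF⟩ := ((hinf _ hprod).sdiff hF).nonempty
  exact ⟨m, IsCoprime.prod_right_iff.1 hm, hmF⟩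

lemma exists_infinite_pairwise_isCoprime (hfib : ∀ c, (v ⁻¹' {c}).Finite)
    (hinf : ∀ a ≠ 0, {m | IsCoprime (v m) a}.Infinite) {E : Finset R} (hE : 0 ∉ E) :
    ∃ S : Set α, S.Infinite ∧ (∀ m ∈ S, ∀ e ∈ E, IsCoprime (v m) e) ∧
      S.Pairwise fun m₁ m₂ ↦ v m₁ ≠ v m₂ ∧ IsCoprime (v m₁) (v m₂) := by
  classical
  have : Std.Symm fun x y : α ↦ v x ≠ v y ∧ IsCoprime (v x) (v y) :=
    ⟨fun _ _ h ↦ ⟨h.1.symm, h.2.symm⟩⟩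
  obtain ⟨f, hf, hpair⟩ := exists_seq_of_forall_finset_exists'
    (fun m ↦ v m ≠ 0 ∧ ∀ e ∈ E, IsCoprime (v m) e)
    (fun x y ↦ v x ≠ v y ∧ IsCoprime (v x) (v y)) fun s hs ↦ by
      have hEs : 0 ∉ E ∪ s.image v := by
        simpa [hE] using fun x hx ↦ (hs x hx).1
      obtain ⟨m, hcop, hnew⟩ :=
        exists_forall_isCoprime_and_notMem hfib hinf hEs (insert 0 (s.image v))
      rw [Finset.mem_insert, not_or] at hnew
      have hv_mem {x} (hx : x ∈ s) : v x ∈ s.image v := Finset.mem_image_of_mem v hx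
      exact ⟨m, ⟨hnew.1, fun e he ↦ hcop e (Finset.mem_union_left _ he)⟩, fun x hx ↦
        ⟨fun h ↦ hnew.2 (h ▸ hv_mem hx), (hcop _ (Finset.mem_union_right _ (hv_mem hx))).symm⟩⟩
  have hinj : Function.Injective f := fun i j hij ↦
    not_not.1 fun hne ↦ (hpair hne).1 (congrArg v hij)
  exact ⟨Set.range f, Set.infinite_range_of_injective hinj,
    Set.forall_mem_range.2 fun i ↦ (hf i).2, hpair.range_pairwise⟩

end Selection

theorem stmt5_general {R K : Type*} [CommRing R] [IsDomain R] [IsNoetherianRing R]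
    [Ring.DimensionLEOne R] [Infinite R] [Field K] [Algebra R K] [IsFractionRing R K]
    (P : K[X]) (v : R → R)
    (hval : ∀ m, algebraMap R K (v m) = P.eval (algebraMap R K m))
    (hnc : 0 < P.natDegree)
    (htp : ∀ 𝔪 : Ideal R, 𝔪.IsMaximal → 𝔪 ≠ ⊥ → ∃ m : R, v m ∉ 𝔪)
    (E : Finset R) (hE : (0 : R) ∉ E) :
    ∃ S : Set R, S.Infinite ∧
      (∀ m ∈ S, ∀ e ∈ E, IsCoprime (v m) e) ∧
      (∀ m₁ ∈ S, ∀ m₂ ∈ S, m₁ ≠ m₂ → v m₁ ≠ v m₂ ∧ IsCoprime (v m₁) (v m₂)) := by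
  obtain ⟨d, hd_mem, hdv⟩ := exists_sub_dvd_mul_sub_of_algebraMap_eq_eval hval
  have hd : d ≠ 0 := nonZeroDivisors.ne_zero hd_mem
  have hinf (a : R) (ha : a ≠ 0) : {m | IsCoprime (v m) a}.Infinite :=
    infinite_setOfPred_isCoprime_of_exists hd hdv ha
      (exists_isCoprime_of_forall_exists_notMem hd hdv htp ha)
  obtain ⟨S, hS, hSE, hpair⟩ := exists_infinite_pairwise_isCoprime
    (finite_preimage_singleton_of_algebraMap_eq_eval hval hnc) hinf hE
  exact ⟨S, hS, hSE, fun _ h₁ _ h₂ ↦ hpair h₁ h₂⟩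

/-- If `P ∈ K[X]` is a nonconstant totally primitive polynomial (with
integral values witnessed by `v : R → R`) and `E ⊆ R \ {0}` is finite, then there are
infinitely many `m` such that `P(m)` is coprime to every element of `E`; moreover these `m`
can be chosen so that the values `P(m)` are pairwise distinct and pairwise coprime. -/
theorem stmt5 {R K : Type*} [CommRing R] [IsDomain R] [IsPrincipalIdealRing R]
    [Infinite R] [Field K] [Algebra R K] [IsFractionRing R K]
    (P : K[X]) (v : R → R)
    (hval : ∀ m, algebraMap R K (v m) = P.eval (algebraMap R K m))
    (hnc : 0 < P.natDegree)
    (htp : ∀ p : R, Prime p → ∃ m : R, ¬ p ∣ v m)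
    (E : Finset R) (hE : (0 : R) ∉ E) :
    ∃ S : Set R, S.Infinite ∧
      (∀ m ∈ S, ∀ e ∈ E, IsCoprime (v m) e) ∧
      (∀ m₁ ∈ S, ∀ m₂ ∈ S, m₁ ≠ m₂ → v m₁ ≠ v m₂ ∧ IsCoprime (v m₁) (v m₂)) :=
  stmt5_general P v hval hnc (fun 𝔪 _ h𝔪 ↦
    (htp _ (Submodule.IsPrincipal.prime_generator_of_isPrime 𝔪 h𝔪)).imp fun _ ↦
      mt (Submodule.IsPrincipal.mem_iff_generator_dvd 𝔪).1) E hE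
end

section
/- Let R be an infinite principal ideal domain with fraction field K, and let P ∈ K[X] be a nonconstant totally primitive polynomial. Suppose P = P_0^α · Q, where P_0 ∈ K[X] is a nonconstant totally primitive polynomial irreducible in K[X], α ≥ 1, Q ∈ K[X], and Q is coprime to P_0 in K[X]. Then there exists an infinite subset S ⊆ R such that for all m, m_1, m_2 ∈ S with m_1 ≠ m_2: (i) P_0(m_1) ≠ P_0(m_2) and P_0(m_1) is coprime to P_0(m_2) in R; (ii) Q(m) ∈ R; (iii) P_0(m) is coprime to Q(m) in R; and (iv) if P_0 is separable, then either P_0(m) is a unit of R, or there is a prime element p of R with p ∣ P_0(m) and p² ∤ P_0(m), and if furthermore the group of units of R is finite, S can be chosen so that P_0(m) is never a unit. -/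
open Polynomial

/-!
Write `v` for the values of `P₀` on `R`, and let `d` be a common denominator of the coefficients of
`P₀`, so that `x - y ∣ d * (v x - v y)`. Hence `v` modulo `c` is periodic of period `d * c`, and
since `P₀` is totally primitive, the Chinese remainder theorem provides, for every `c ≠ 0`, an
arithmetic progression of `m` with `v m` coprime to `c`. Choosing `c` to be a multiple of all
earlier values makes the values pairwise coprime. Choosing it to be a multiple also of a denominator
of `Q` and of a constant in a Bézout relation between `P₀` and `Q` forces `Q(m)` to lie in `R` and
to be coprime to `v m`. If `P₀` is separable, a Bézout relation between `P₀` and `P₀'` shows in the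
same way that `P₀'(m)` is prime to `v m`; so if `q ^ 2 ∣ v m` for a prime `q`, a shift of `m` by
`q * h` with `h` prime to `q` makes the value divisible by `q` exactly once.
-/

section Definitions

variable {R : Type*} [CommRing R]

/-- `v` is the restriction to `R` of the polynomial function of `F ∈ K[X]`; such a `v` exists if and
only if `F` is integrally valued. -/
def IsValueMap {K : Type*} [CommRing K] [Algebra R K] (F : K[X]) (v : R → R) : Prop :=
  ∀ m, algebraMap R K (v m) = F.eval (algebraMap R K m)

/-- `v` has no fixed prime divisor. The polynomial with values `v` is then totally primitive. -/
def TotallyPrimitive (v : R → R) : Prop :=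
  ∀ p : R, Prime p → ∃ m : R, ¬ p ∣ v m

/-- Some prime element of `R` divides `x` exactly once. -/
def HasSimplePrimeFactor (x : R) : Prop :=
  ∃ p : R, Prime p ∧ p ∣ x ∧ ¬ p ^ 2 ∣ x

/-- Congruences between arguments of `v` are inherited by its values after multiplication by `d`.
This is the only trace of polynomiality that coprimality arguments need; `d` plays the role of a
common denominator of the coefficients. -/
def CongruencePreservingUpTo (d : R) (v : R → R) : Prop :=
  ∀ x y, x - y ∣ d * (v x - v y)

end Definitions

theorem isCoprime_of_dvd_sub {R : Type*} [CommRing R] {a b c : R} (ha : IsCoprime a c)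
    (hab : c ∣ b - a) : IsCoprime b c := by
  obtain ⟨k, hk⟩ := hab
  rw [sub_eq_iff_eq_add'.1 hk]
  exact ha.add_mul_left_left k

namespace CongruencePreservingUpTo

variable {R : Type*} [CommRing R] {d : R} {v : R → R}

theorem of_eval_eq_mul {f : R[X]} (hf : ∀ m, f.eval m = d * v m) :
    CongruencePreservingUpTo d v := fun x y ↦ by
  rw [mul_sub, ← hf, ← hf]
  exact sub_dvd_eval_sub x y f

variable [IsDomain R]

theorem dvd_sub (hv : CongruencePreservingUpTo d v) (hd : d ≠ 0) {c x y : R}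
    (hxy : d * c ∣ x - y) : c ∣ v x - v y :=
  (mul_dvd_mul_iff_left hd).1 (hxy.trans (hv x y))

theorem isCoprime_add_mul (hv : CongruencePreservingUpTo d v) (hd : d ≠ 0) {c a : R}
    (ha : IsCoprime (v a) c) (t : R) : IsCoprime (v (a + d * c * t)) c :=
  isCoprime_of_dvd_sub ha (hv.dvd_sub hd ⟨t, add_sub_cancel_left a _⟩)

variable [IsPrincipalIdealRing R]

/-- Splitting off from `d` its `p`-part makes the two congruences to be solved, one modulo a power
of `p` and one modulo a multiple of `c`, independent. -/
theorem exists_isCoprime_mul (hv : CongruencePreservingUpTo d v) (hd : d ≠ 0) {p c a b : R}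
    (hp : Prime p) (hpc : ¬ p ∣ c) (ha : IsCoprime (v a) c) (hb : ¬ p ∣ v b) :
    ∃ y, IsCoprime (v y) (p * c) := by
  obtain ⟨d', hdd', hpd'⟩ :=
    (FiniteMultiplicity.of_prime_left hp hd).exists_eq_pow_mul_and_not_dvd
  set k := multiplicity p d
  have hd' : d' ≠ 0 := right_ne_zero_of_mul (hdd' ▸ hd)
  have hp_cop {x : R} : IsCoprime p x ↔ ¬ p ∣ x := hp.coprime_iff_not_dvd
  obtain ⟨u, w, huw⟩ : IsCoprime (p ^ (k + 1)) (d' * c) :=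
    ((hp_cop.2 hpd').mul_right (hp_cop.2 hpc)).pow_left
  obtain ⟨y, hyb, hya⟩ : ∃ y, p ^ (k + 1) ∣ y - b ∧ d' * c ∣ y - a :=
    ⟨a * (u * p ^ (k + 1)) + b * (w * (d' * c)),
      ⟨(a - b) * u, by linear_combination b * huw⟩, ⟨(b - a) * w, by linear_combination a * huw⟩⟩
  have hp_dvd : p ∣ v y - v b := by
    have hdvd : p ∣ d' * (v y - v b) := by
      rw [← mul_dvd_mul_iff_left (pow_ne_zero k hp.ne_zero), ← pow_succ, ← mul_assoc, ← hdd']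
      exact hyb.trans (hv y b)
    exact (hp.dvd_or_dvd hdvd).resolve_left hpd'
  have hc_dvd : c ∣ v y - v a := by
    have hdvd : c ∣ p ^ k * (v y - v a) := by
      rw [← mul_dvd_mul_iff_left hd', ← mul_assoc, mul_comm d' (p ^ k), ← hdd']
      exact hya.trans (hv y a)
    exact (hp_cop.2 hpc).symm.pow_right.dvd_of_dvd_mul_left hdvd
  have hpy : ¬ p ∣ v y := fun hpy ↦ hb ((dvd_sub_right hpy).1 hp_dvd)
  exact ⟨y, (hp_cop.2 hpy).symm.mul_right (isCoprime_of_dvd_sub ha hc_dvd)⟩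

theorem exists_isCoprime (hv : CongruencePreservingUpTo d v) (hd : d ≠ 0)
    (hprim : TotallyPrimitive v) {c : R} (hc : c ≠ 0) : ∃ a, IsCoprime (v a) c := by
  induction c using UniqueFactorizationMonoid.induction_on_prime with
  | h₁ => exact absurd rfl hc
  | h₂ c hunit => exact ⟨0, isCoprime_one_right.mono dvd_rfl hunit.dvd⟩
  | h₃ c p hc' hp ih =>
    obtain ⟨a, ha⟩ := ih hc'
    by_cases hpa : p ∣ v a
    · have hpc : ¬ p ∣ c := fun hpc ↦ hp.not_isUnit (ha.isUnit_of_dvd' hpa hpc)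
      obtain ⟨b, hb⟩ := hprim p hp
      exact hv.exists_isCoprime_mul hd hp hpc ha hb
    · exact ⟨a, (hp.coprime_iff_not_dvd.2 hpa).symm.mul_right ha⟩

end CongruencePreservingUpTo

section Frequently

open Filter

variable {R : Type*} [CommRing R] [IsDomain R]

theorem frequently_cofinite_of_forall_add_mul [Infinite R] {p : R → Prop} {a n : R} (hn : n ≠ 0)
    (h : ∀ t, p (a + n * t)) : ∃ᶠ m in cofinite, p m :=
  frequently_cofinite_iff_infinite.2 <| Set.infinite_of_injective_forall_mem
    ((add_right_injective a).comp (mul_right_injective₀ hn)) h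

theorem CongruencePreservingUpTo.frequently_isCoprime [Infinite R] [IsPrincipalIdealRing R]
    {d : R} {v : R → R} (hv : CongruencePreservingUpTo d v) (hd : d ≠ 0)
    (hprim : TotallyPrimitive v) {c : R} (hc : c ≠ 0) :
    ∃ᶠ m in cofinite, IsCoprime (v m) c := by
  obtain ⟨a, ha⟩ := hv.exists_isCoprime hd hprim hc
  exact frequently_cofinite_of_forall_add_mul (mul_ne_zero hd hc) (hv.isCoprime_add_mul hd ha)

theorem exists_infinite_pairwise_isCoprime_s6 {ι : Type*} {v : ι → R} {p : ι → Prop}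
    (hv : Tendsto v cofinite cofinite)
    (h : ∀ c ≠ 0, ∃ᶠ i in cofinite, IsCoprime (v i) c ∧ p i) :
    ∃ S : Set ι, S.Infinite ∧ (S.Pairwise fun i j ↦ v i ≠ v j ∧ IsCoprime (v i) (v j)) ∧
      ∀ i ∈ S, p i := by
  classical
  have : Std.Symm fun i j ↦ v i ≠ v j ∧ IsCoprime (v i) (v j) :=
    ⟨fun _ _ hij ↦ ⟨hij.1.symm, hij.2.symm⟩⟩
  obtain ⟨f, hf, hf_pair⟩ := exists_seq_of_forall_finset_exists'
    (fun i ↦ v i ≠ 0 ∧ p i) (fun i j ↦ v i ≠ v j ∧ IsCoprime (v i) (v j)) fun s hs ↦ by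
      have havoid : ∀ᶠ i in cofinite, v i ∉ insert 0 (s.image v) :=
        hv.eventually (Finset.eventually_cofinite_notMem _)
      obtain ⟨i, ⟨hcop, hpi⟩, hi⟩ := ((h (∏ j ∈ s, v j)
        (Finset.prod_ne_zero_iff.2 fun j hj ↦ (hs j hj).1)).and_eventually havoid).exists
      rw [Finset.mem_insert, not_or, Finset.mem_image] at hi
      exact ⟨i, ⟨hi.1, hpi⟩, fun j hj ↦
        ⟨fun hji ↦ hi.2 ⟨j, hj, hji⟩, (IsCoprime.prod_right_iff.1 hcop j hj).symm⟩⟩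
  have hf_inj : Function.Injective f := fun i j hij ↦ by
    by_contra hne
    exact (hf_pair hne).1 (congrArg v hij)
  exact ⟨Set.range f, Set.infinite_range_of_injective hf_inj,
    hf_pair.range_pairwise, Set.forall_mem_range.2 fun n ↦ (hf n).2⟩

end Frequently

section SimplePrimeFactor

open Filter

variable {R : Type*} [CommRing R] [IsDomain R]

theorem sq_dvd_eval_add_mul_iff {f : R[X]} {q m : R} (hq : q ≠ 0) (hm : q ^ 2 ∣ f.eval m) (h : R) :
    q ^ 2 ∣ f.eval (m + q * h) ↔ q ∣ f.derivative.eval m * h := by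
  obtain ⟨k, hk⟩ := f.binomExpansion m (q * h)
  have hrest : q ^ 2 ∣ f.eval m + q ^ 2 * (k * h ^ 2) := dvd_add hm (dvd_mul_right _ _)
  have hexp : f.eval (m + q * h) =
      q * (f.derivative.eval m * h) + (f.eval m + q ^ 2 * (k * h ^ 2)) := by
    rw [hk]; ring
  rw [hexp, dvd_add_left hrest, sq, mul_dvd_mul_iff_left hq]

theorem hasSimplePrimeFactor_add_mul {f : R[X]} {d : R} {v : R → R}
    (hf : ∀ m, f.eval m = d * v m) {q m h : R} (hq : Prime q) (hqd : ¬ q ∣ d)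
    (hm : q ^ 2 ∣ v m) (hder : ¬ q ∣ f.derivative.eval m) (hh : ¬ q ∣ h) :
    HasSimplePrimeFactor (v (m + q * h)) := by
  refine ⟨q, hq, ?_, fun hsq ↦ ?_⟩
  · have hqv : q ∣ d * v m := ((dvd_pow_self q two_ne_zero).trans hm).mul_left d
    have hsub : q ∣ f.eval (m + q * h) - f.eval m :=
      (Dvd.intro h (add_sub_cancel_left m _).symm).trans (sub_dvd_eval_sub _ _ f)
    rw [hf, hf, dvd_sub_left hqv] at hsub
    exact (hq.dvd_or_dvd hsub).resolve_left hqd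
  · have hfm : q ^ 2 ∣ f.eval m := hf m ▸ hm.mul_left d
    have hfm' : q ^ 2 ∣ f.eval (m + q * h) := hf _ ▸ hsq.mul_left d
    have hdvd := (sq_dvd_eval_add_mul_iff hq.ne_zero hfm h).1 hfm'
    exact (hq.dvd_or_dvd hdvd).elim hder hh

theorem frequently_isCoprime_and_hasSimplePrimeFactor_of_sq_dvd [Infinite R] {f : R[X]}
    {d c : R} {v : R → R} (hf : ∀ m, f.eval m = d * v m) (hd : d ≠ 0) (hc : c ≠ 0) {q m : R}
    (hq : Prime q) (hqd : ¬ q ∣ d) (hcop : IsCoprime (v m) c) (hm : q ^ 2 ∣ v m)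
    (hder : ¬ q ∣ f.derivative.eval m) :
    ∃ᶠ n in cofinite, IsCoprime (v n) c ∧ HasSimplePrimeFactor (v n) := by
  have hv : CongruencePreservingUpTo d v := .of_eval_eq_mul hf
  have hqc : ¬ q ∣ c := fun hqc ↦
    hq.not_isUnit (hcop.isUnit_of_dvd' ((dvd_pow_self q two_ne_zero).trans hm) hqc)
  refine frequently_cofinite_of_forall_add_mul (a := m + q * (d * c)) (n := q ^ 2 * (d * c))
    (by simp [hq.ne_zero, hd, hc]) fun t ↦ ⟨?_, ?_⟩
  · rw [show m + q * (d * c) + q ^ 2 * (d * c) * t = m + d * c * (q * (1 + q * t)) by ring]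
    exact hv.isCoprime_add_mul hd hcop _
  · have hq_step : ¬ q ∣ 1 + q * t :=
      fun hdvd ↦ hq.not_dvd_one ((dvd_add_left (dvd_mul_right q t)).1 hdvd)
    rw [show m + q * (d * c) + q ^ 2 * (d * c) * t = m + q * (d * c * (1 + q * t)) by ring]
    exact hasSimplePrimeFactor_add_mul hf hq hqd hm hder
      (hq.not_dvd_mul (hq.not_dvd_mul hqd hqc) hq_step)

theorem frequently_isCoprime_and_isUnit_or_hasSimplePrimeFactor [Infinite R]
    [IsPrincipalIdealRing R] {f : R[X]} {d e c : R} {v : R → R}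
    (hf : ∀ m, f.eval m = d * v m) (hd : d ≠ 0) (hfin : Tendsto v cofinite cofinite)
    (hprim : TotallyPrimitive v) (he : e ≠ 0)
    (hder : ∀ m, IsCoprime (v m) e → IsCoprime (v m) (f.derivative.eval m)) (hc : c ≠ 0) :
    ∃ᶠ m in cofinite, IsCoprime (v m) c ∧ (IsUnit (v m) ∨ HasSimplePrimeFactor (v m)) := by
  have hv : CongruencePreservingUpTo d v := .of_eval_eq_mul hf
  have hcde : c * (d * e) ≠ 0 := mul_ne_zero hc (mul_ne_zero hd he)
  by_contra hrare
  obtain ⟨m, ⟨hcop, hm_rare⟩, hm⟩ := (((hv.frequently_isCoprime hd hprim hcde).and_eventually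
    (not_frequently.1 hrare)).and_eventually (hfin.eventually (eventually_cofinite_ne 0))).exists
  obtain ⟨hnonunit, hnonsimple⟩ : ¬ IsUnit (v m) ∧ ¬ HasSimplePrimeFactor (v m) :=
    not_or.1 fun hgood ↦ hm_rare ⟨hcop.of_mul_right_left, hgood⟩
  obtain ⟨q, hq_irr, hqv⟩ := WfDvdMonoid.exists_irreducible_factor hnonunit hm
  have hq : Prime q := hq_irr.prime
  have hqsq : q ^ 2 ∣ v m := by_contra fun hsq ↦ hnonsimple ⟨q, hq, hqv, hsq⟩
  have not_dvd {x : R} (hx : IsCoprime (v m) x) : ¬ q ∣ x :=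
    fun hqx ↦ hq.not_isUnit (hx.isUnit_of_dvd' hqv hqx)
  have hqd : ¬ q ∣ d := not_dvd hcop.of_mul_right_right.of_mul_right_left
  have hqder : ¬ q ∣ f.derivative.eval m :=
    not_dvd (hder m hcop.of_mul_right_right.of_mul_right_right)
  exact hrare ((frequently_isCoprime_and_hasSimplePrimeFactor_of_sq_dvd hf hd hcde hq hqd
    hcop hqsq hqder).mono fun n hn ↦ ⟨hn.1.of_mul_right_left, .inr hn.2⟩)

end SimplePrimeFactor

section IntegerValues

open Filter IsLocalization

variable {R K : Type*} [CommRing R] [CommRing K] [Algebra R K]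

theorem isInteger_of_isCoprime {a b : R} (h : IsCoprime a b) {x : K}
    (ha : IsInteger R (a • x)) (hb : IsInteger R (b • x)) : IsInteger R x := by
  obtain ⟨u, w, huw⟩ := h
  have hx : x = u • a • x + w • b • x := by rw [smul_smul, smul_smul, ← add_smul, huw, one_smul]
  rw [hx]
  exact isInteger_add (isInteger_smul ha) (isInteger_smul hb)

variable [FaithfulSMul R K]

theorem IsValueMap.tendsto_cofinite [IsDomain K] {F : K[X]} {v : R → R} (hv : IsValueMap F v)
    (hF : 0 < F.natDegree) : Tendsto v cofinite cofinite := by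
  refine .cofinite_of_finite_preimage_singleton fun b ↦ ?_
  by_contra hinf
  have hF_const : F = C (algebraMap R K b) := by
    refine eq_of_infinite_eval_eq _ _ ((Set.Infinite.image
      (FaithfulSMul.algebraMap_injective R K).injOn hinf).mono ?_)
    rintro _ ⟨m, hm, rfl⟩
    rw [Set.mem_ofPred_eq, eval_C, ← hv m, hm]
  rw [hF_const, natDegree_C] at hF
  exact hF.false

theorem IsValueMap.eval_eq_mul {F : K[X]} {v : R → R} (hv : IsValueMap F v) {f : R[X]} {d : R}
    (hf : f.map (algebraMap R K) = C (algebraMap R K d) * F) (m : R) : f.eval m = d * v m := by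
  apply FaithfulSMul.algebraMap_injective R K
  rw [← eval_map_apply, hf, eval_mul, eval_C, map_mul, hv m]

end IntegerValues

section FractionField

open Filter IsLocalization

variable {R K : Type*} [CommRing R] [IsDomain R] [Field K] [Algebra R K] [IsFractionRing R K]

variable (R) in
theorem exists_map_eq_C_mul (F : K[X]) :
    ∃ (f : R[X]) (d : R), d ≠ 0 ∧ f.map (algebraMap R K) = C (algebraMap R K d) * F := by
  obtain ⟨d, hd, hF⟩ := integerNormalization_spec (nonZeroDivisors R) F
  refine ⟨_, d, nonZeroDivisors.ne_zero hd, hF.trans ?_⟩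
  rw [← smul_eq_C_mul, algebraMap_smul]

variable (R) in
/-- `e` comes from clearing denominators in a Bézout relation between `F` and `G`. -/
theorem exists_forall_isCoprime_eval {F G : K[X]} (h : IsCoprime F G) :
    ∃ e : R, e ≠ 0 ∧ ∀ m x y : R, algebraMap R K x = F.eval (algebraMap R K m) →
      algebraMap R K y = G.eval (algebraMap R K m) → IsCoprime x e → IsCoprime x y := by
  obtain ⟨A, B, hAB⟩ := h
  obtain ⟨a, k, hk, ha⟩ := exists_map_eq_C_mul R A
  obtain ⟨b, l, hl, hb⟩ := exists_map_eq_C_mul R B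
  refine ⟨k * l, mul_ne_zero hk hl, fun m x y hx hy hxe ↦ ?_⟩
  have hbezout : l * a.eval m * x + k * b.eval m * y = k * l := by
    apply IsFractionRing.injective R K
    have hm := congrArg (eval (algebraMap R K m)) hAB
    simp only [eval_add, eval_mul, eval_one, ← hx, ← hy] at hm
    simp only [map_add, map_mul, ← eval_map_apply, ha, hb, eval_mul, eval_C]
    linear_combination algebraMap R K k * algebraMap R K l * hm
  rw [← hbezout, add_comm, IsCoprime.add_mul_right_right_iff] at hxe
  exact hxe.of_mul_right_right

theorem exists_forall_isCoprime_cofactor {F G : K[X]} {v w : R → R} {n : ℕ} (hv : IsValueMap F v)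
    (hw : IsValueMap (F ^ n * G) w) (h : IsCoprime F G) :
    ∃ b : R, b ≠ 0 ∧ ∀ m, IsCoprime (v m) b →
      ∃ y : R, algebraMap R K y = G.eval (algebraMap R K m) ∧ IsCoprime (v m) y := by
  obtain ⟨g, c, hc, hg⟩ := exists_map_eq_C_mul R G
  obtain ⟨e, he, hcop⟩ := exists_forall_isCoprime_eval R h
  refine ⟨c * e, mul_ne_zero hc he, fun m hm ↦ ?_⟩
  have hc_int : IsInteger R (c • G.eval (algebraMap R K m)) :=
    ⟨g.eval m, by rw [← eval_map_apply, hg, eval_mul, eval_C, Algebra.smul_def]⟩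
  have hv_int : IsInteger R (v m ^ n • G.eval (algebraMap R K m)) :=
    ⟨w m, by rw [hw m, eval_mul, eval_pow, Algebra.smul_def, map_pow, hv m]⟩
  obtain ⟨y, hy⟩ := isInteger_of_isCoprime hm.of_mul_right_left.pow_left hv_int hc_int
  exact ⟨y, hy, hcop m _ y (hv m) hy hm.of_mul_right_right⟩

variable [IsPrincipalIdealRing R] [Infinite R]

theorem IsValueMap.frequently_isCoprime {F : K[X]} {v : R → R} (hv : IsValueMap F v)
    (hprim : TotallyPrimitive v) {c : R} (hc : c ≠ 0) :
    ∃ᶠ m in cofinite, IsCoprime (v m) c := by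
  obtain ⟨f, d, hd, hf⟩ := exists_map_eq_C_mul R F
  exact (CongruencePreservingUpTo.of_eval_eq_mul (hv.eval_eq_mul hf)).frequently_isCoprime
    hd hprim hc

theorem IsValueMap.frequently_isCoprime_of_separable {F : K[X]} {v : R → R} (hv : IsValueMap F v)
    (hF : 0 < F.natDegree) (hprim : TotallyPrimitive v) (hsep : F.Separable) {c : R} (hc : c ≠ 0) :
    ∃ᶠ m in cofinite, IsCoprime (v m) c ∧ (IsUnit (v m) ∨ HasSimplePrimeFactor (v m)) := by
  obtain ⟨f, d, hd, hf⟩ := exists_map_eq_C_mul R F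
  have hd_unit : IsUnit (C (algebraMap R K d)) :=
    isUnit_C.2 ((map_ne_zero_iff _ (IsFractionRing.injective R K)).2 hd).isUnit
  have hsep' : IsCoprime F (C (algebraMap R K d) * derivative F) :=
    (isCoprime_mul_unit_left_right hd_unit _ _).2 hsep
  obtain ⟨e, he, hcop⟩ := exists_forall_isCoprime_eval R hsep'
  refine frequently_isCoprime_and_isUnit_or_hasSimplePrimeFactor (hv.eval_eq_mul hf) hd
    (hv.tendsto_cofinite hF) hprim he (fun m ↦ hcop m _ _ (hv m) ?_) hc
  rw [← eval_map_apply, ← derivative_map, hf, derivative_C_mul]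

theorem IsValueMap.frequently_isCoprime_and_separable_imp {F : K[X]} {v : R → R}
    (hv : IsValueMap F v) (hF : 0 < F.natDegree) (hprim : TotallyPrimitive v) {c : R} (hc : c ≠ 0) :
    ∃ᶠ m in cofinite, IsCoprime (v m) c ∧
      (F.Separable → (IsUnit (v m) ∨ HasSimplePrimeFactor (v m)) ∧
        (Finite Rˣ → ¬ IsUnit (v m))) := by
  have hunits : ∀ᶠ m in cofinite, Finite Rˣ → ¬ IsUnit (v m) := by
    rw [eventually_imp_distrib_left]
    exact fun _ ↦ (hv.tendsto_cofinite hF).eventually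
      (Set.finite_range (Units.val : Rˣ → R)).eventually_cofinite_notMem
  by_cases hsep : F.Separable
  · refine ((hv.frequently_isCoprime_of_separable hF hprim hsep hc).and_eventually hunits).mono ?_
    exact fun m ⟨⟨hcop, hgood⟩, hnonunit⟩ ↦ ⟨hcop, fun _ ↦ ⟨hgood, hnonunit⟩⟩
  · exact (hv.frequently_isCoprime hprim hc).mono fun m hcop ↦ ⟨hcop, fun h ↦ absurd h hsep⟩

end FractionField

theorem stmt6_general {R K : Type*} [CommRing R] [IsDomain R] [IsPrincipalIdealRing R]
    [Infinite R] [Field K] [Algebra R K] [IsFractionRing R K]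
    (P₀ Q : K[X]) (α : ℕ) (vP v₀ : R → R)
    (hvP : ∀ m, algebraMap R K (vP m) = (P₀ ^ α * Q).eval (algebraMap R K m))
    (hv₀ : ∀ m, algebraMap R K (v₀ m) = P₀.eval (algebraMap R K m))
    (hnc₀ : 0 < P₀.natDegree)
    (htp₀ : ∀ p : R, Prime p → ∃ m : R, ¬ p ∣ v₀ m)
    (hcop : IsCoprime Q P₀) :
    ∃ S : Set R, S.Infinite ∧
      (∀ m₁ ∈ S, ∀ m₂ ∈ S, m₁ ≠ m₂ → v₀ m₁ ≠ v₀ m₂ ∧ IsCoprime (v₀ m₁) (v₀ m₂)) ∧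
      (∀ m ∈ S, ∃ q : R, algebraMap R K q = Q.eval (algebraMap R K m) ∧
        IsCoprime (v₀ m) q) ∧
      (P₀.Separable →
        (∀ m ∈ S, IsUnit (v₀ m) ∨ ∃ p : R, Prime p ∧ p ∣ v₀ m ∧ ¬ p ^ 2 ∣ v₀ m) ∧
        (Finite Rˣ → ∀ m ∈ S, ¬ IsUnit (v₀ m))) := by
  have hv : IsValueMap P₀ v₀ := hv₀
  obtain ⟨b, hb, hQ⟩ := exists_forall_isCoprime_cofactor hv hvP hcop.symm
  obtain ⟨S, hS, hpair, hgood⟩ := exists_infinite_pairwise_isCoprime_s6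
    (p := fun m ↦ IsCoprime (v₀ m) b ∧ (P₀.Separable →
      (IsUnit (v₀ m) ∨ HasSimplePrimeFactor (v₀ m)) ∧ (Finite Rˣ → ¬ IsUnit (v₀ m))))
    (hv.tendsto_cofinite hnc₀) fun c hc ↦
      (hv.frequently_isCoprime_and_separable_imp hnc₀ htp₀ (mul_ne_zero hc hb)).mono
        fun m ⟨hm, hsep⟩ ↦ ⟨hm.of_mul_right_left, hm.of_mul_right_right, hsep⟩
  exact ⟨S, hS, fun m₁ h₁ m₂ h₂ hne ↦ hpair h₁ h₂ hne, fun m hm ↦ hQ m (hgood m hm).1,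
    fun hsep ↦ ⟨fun m hm ↦ ((hgood m hm).2 hsep).1,
      fun hunits m hm ↦ ((hgood m hm).2 hsep).2 hunits⟩⟩

/-- Manipulation of a totally primitive prime factor: `P` is a nonconstant
totally primitive polynomial, `P = P₀ ^ α * Q` where `P₀` is a nonconstant totally primitive
polynomial irreducible in `K[X]`, `α ≥ 1`, and `Q` is coprime to `P₀` in `K[X]`.  Then there
is an infinite `S ⊆ R` such that: the values `P₀(m)` (`m ∈ S`) are pairwise distinct and
coprime; `Q(m) ∈ R` for `m ∈ S`; `P₀(m)` is coprime to `Q(m)` in `R`; and, if `P₀` is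
separable, `P₀(m)` is a unit or is divisible by some prime `p` but not by `p²`, and if
furthermore `Rˣ` is finite then `P₀(m)` is never a unit. -/
theorem stmt6 {R K : Type*} [CommRing R] [IsDomain R] [IsPrincipalIdealRing R]
    [Infinite R] [Field K] [Algebra R K] [IsFractionRing R K]
    (P P₀ Q : K[X]) (α : ℕ) (hα : 1 ≤ α)
    (vP v₀ : R → R)
    (hvP : ∀ m, algebraMap R K (vP m) = P.eval (algebraMap R K m))
    (hv₀ : ∀ m, algebraMap R K (v₀ m) = P₀.eval (algebraMap R K m))
    (hncP : 0 < P.natDegree) (hnc₀ : 0 < P₀.natDegree)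
    (htpP : ∀ p : R, Prime p → ∃ m : R, ¬ p ∣ vP m)
    (htp₀ : ∀ p : R, Prime p → ∃ m : R, ¬ p ∣ v₀ m)
    (hirr : Irreducible P₀)
    (hfac : P = P₀ ^ α * Q)
    (hcop : IsCoprime Q P₀) :
    ∃ S : Set R, S.Infinite ∧
      (∀ m₁ ∈ S, ∀ m₂ ∈ S, m₁ ≠ m₂ → v₀ m₁ ≠ v₀ m₂ ∧ IsCoprime (v₀ m₁) (v₀ m₂)) ∧
      (∀ m ∈ S, ∃ q : R, algebraMap R K q = Q.eval (algebraMap R K m) ∧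
        IsCoprime (v₀ m) q) ∧
      (P₀.Separable →
        (∀ m ∈ S, IsUnit (v₀ m) ∨ ∃ p : R, Prime p ∧ p ∣ v₀ m ∧ ¬ p ^ 2 ∣ v₀ m) ∧
        (Finite Rˣ → ∀ m ∈ S, ¬ IsUnit (v₀ m))) := by
  subst hfac
  exact stmt6_general P₀ Q α vP v₀ hvP hv₀ hnc₀ htp₀ hcop
end

section
/- Let R be an infinite principal ideal domain with fraction field K, and let P_1, …, P_n ∈ K[X] be totally primitive polynomials. Suppose there exists an infinite subset T ⊆ R such that for every i and all m_1, m_2 ∈ T with m_1 ≠ m_2, P_i(m_1) is coprime to P_i(m_2) in R. Then the product P = P_1⋯P_n is totally primitive. Moreover, there exists an infinite subset S ⊆ T such that for all m, m_1, m_2 ∈ S with m_1 ≠ m_2: P(m_1) is coprime to P(m_2) in R, and for all distinct i, j such that P_i and P_j are coprime in K[X], P_i(m) is coprime to P_j(m) in R. -/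
open Polynomial

/-!
If the values of `w` on `T` are pairwise coprime, then a proper ideal contains at most one of them.
Hence a prime ideal contains the values on `T` of a finite product of such functions only finitely
often; for maximal ideals this already yields total primitivity of the product. A nonzero `r` lies
in only finitely many maximal ideals, so it is coprime to all but finitely many of these values.
Applied to `r = P m₁`, this lets one choose `S` greedily. Applied to a nonzero `d ∈ R` obtained by
clearing denominators in a Bézout identity for `P i` and `P j`, so that `d` lies in the ideal
generated by `P i m` and `P j m` for every `m`, it shows that these two values are coprime for all
but finitely many `m ∈ T`.
-/

theorem exists_infinite_subset_pairwise {α : Type*} {T : Set α} {r : α → α → Prop} [Std.Symm r]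
    (hT : T.Infinite) (hr : ∀ a ∈ T, {b ∈ T | ¬ r a b}.Finite) :
    ∃ S ⊆ T, S.Infinite ∧ S.Pairwise r := by
  have : Std.Symm fun a b => a ≠ b ∧ r a b := ⟨fun _ _ h => ⟨h.1.symm, symm h.2⟩⟩
  have hnext : ∀ s : Finset α, (∀ a ∈ s, a ∈ T) → ∃ b, b ∈ T ∧ ∀ a ∈ s, a ≠ b ∧ r a b := by
    intro s hs
    have hbad : (⋃ a ∈ s, {b ∈ T | ¬ r a b}).Finite :=
      s.finite_toSet.biUnion fun a ha => hr a (hs a ha)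
    obtain ⟨b, ⟨hbT, hb⟩, hbs⟩ := ((hT.sdiff hbad).sdiff s.finite_toSet).nonempty
    refine ⟨b, hbT, fun a ha => ⟨fun hab => hbs (hab ▸ ha), ?_⟩⟩
    by_contra hab
    exact hb (Set.mem_biUnion ha ⟨hbT, hab⟩)
  obtain ⟨f, hfT, hf⟩ := exists_seq_of_forall_finset_exists' (· ∈ T) _ hnext
  have hinj : f.Injective := fun k l hkl => by_contra fun hne => (hf hne).1 hkl
  refine ⟨Set.range f, Set.range_subset_iff.2 hfT, Set.infinite_range_of_injective hinj, ?_⟩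
  rintro _ ⟨k, rfl⟩ _ ⟨l, rfl⟩ hkl
  exact (hf (ne_of_apply_ne f hkl)).2

section ValuesInIdeals

variable {α ι R : Type*} [CommRing R] {T : Set α}

theorem subsingleton_setOf_mem_of_pairwise_isCoprime {w : α → R} {I : Ideal R}
    (hw : T.Pairwise fun a b => IsCoprime (w a) (w b)) (hI : I ≠ ⊤) :
    {m ∈ T | w m ∈ I}.Subsingleton := by
  rintro a ⟨haT, ha⟩ b ⟨hbT, hb⟩
  by_contra hab
  obtain ⟨x, y, hxy⟩ := hw haT hbT hab
  exact hI (I.eq_top_iff_one.2 (hxy ▸ I.add_mem (I.mul_mem_left x ha) (I.mul_mem_left y hb)))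

theorem finite_setOf_prod_mem_of_pairwise_isCoprime [Fintype ι] {w : ι → α → R}
    (hw : ∀ i, T.Pairwise fun a b => IsCoprime (w i a) (w i b)) (I : Ideal R) [hI : I.IsPrime] :
    {m ∈ T | ∏ i, w i m ∈ I}.Finite := by
  have hunion : (⋃ i, {m ∈ T | w i m ∈ I}).Finite := Set.finite_iUnion fun i =>
    (subsingleton_setOf_mem_of_pairwise_isCoprime (hw i) hI.ne_top).finite
  refine hunion.subset ?_
  rintro m ⟨hmT, hm⟩
  obtain ⟨i, -, hi⟩ := hI.prod_mem_iff.1 hm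
  exact Set.mem_iUnion.2 ⟨i, hmT, hi⟩

theorem span_image_eq_top_of_finite_setOf_mem {u : α → R} (hT : T.Infinite)
    (hu : ∀ M : Ideal R, M.IsMaximal → {m ∈ T | u m ∈ M}.Finite) :
    Ideal.span (u '' T) = ⊤ := by
  by_contra hne
  obtain ⟨M, hM, hle⟩ := Ideal.exists_le_maximal _ hne
  exact hT ((hu M hM).subset fun m hm =>
    ⟨hm, hle (Ideal.subset_span (Set.mem_image_of_mem u hm))⟩)

theorem exists_not_dvd_of_span_range_eq_top {u : α → R} (hu : Ideal.span (Set.range u) = ⊤)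
    {p : R} (hp : ¬ IsUnit p) : ∃ m, ¬ p ∣ u m := by
  by_contra! hdvd
  have hle : Ideal.span (Set.range u) ≤ Ideal.span {p} :=
    Ideal.span_le.2 (Set.range_subset_iff.2 fun m => Ideal.mem_span_singleton.2 (hdvd m))
  exact hp (Ideal.span_singleton_eq_top.1 (top_le_iff.1 (hu ▸ hle)))

end ValuesInIdeals

section Coprimality

variable {R : Type*} [CommRing R]

theorem exists_isMaximal_mem_of_not_isCoprime {a b : R} (hab : ¬ IsCoprime a b) :
    ∃ M : Ideal R, M.IsMaximal ∧ a ∈ M ∧ b ∈ M := by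
  have hne : Ideal.span {a, b} ≠ ⊤ := fun htop =>
    hab (Ideal.mem_span_pair.1 ((Ideal.eq_top_iff_one _).1 htop))
  obtain ⟨M, hM, hle⟩ := Ideal.exists_le_maximal _ hne
  exact ⟨M, hM, hle (Ideal.subset_span (by simp)), hle (Ideal.subset_span (by simp))⟩

theorem isCoprime_of_mem_span_pair {a b d : R} (hd : d ∈ Ideal.span {a, b})
    (hda : IsCoprime d a) : IsCoprime a b := by
  obtain ⟨x, y, rfl⟩ := Ideal.mem_span_pair.1 hd
  obtain ⟨s, t, hst⟩ := hda
  exact ⟨s * x + t, s * y, by linear_combination hst⟩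

variable [IsNoetherianRing R] [Ring.DimensionLEOne R]

theorem finite_setOf_isMaximal_mem {r : R} (hr : r ≠ 0) :
    {M : Ideal R | M.IsMaximal ∧ r ∈ M}.Finite := by
  refine (Ideal.finite_minimalPrimes_of_isNoetherianRing R (Ideal.span {r})).subset ?_
  rintro M ⟨hM, hrM⟩
  obtain ⟨Q, hQ, hQM⟩ :=
    Ideal.exists_minimalPrimes_le ((Ideal.span_singleton_le_iff_mem M).2 hrM)
  have hrQ : r ∈ Q := (Ideal.span_singleton_le_iff_mem Q).1 hQ.1.2
  have hQmax : Q.IsMaximal := hQ.1.1.isMaximal ((Submodule.ne_bot_iff Q).2 ⟨r, hrQ, hr⟩)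
  exact hQmax.eq_of_le hM.ne_top hQM ▸ hQ

theorem finite_setOf_not_isCoprime_of_finite_setOf_mem {α : Type*} {T : Set α} {u : α → R}
    (hu : ∀ M : Ideal R, M.IsMaximal → {m ∈ T | u m ∈ M}.Finite) {r : R} (hr : r ≠ 0) :
    {m ∈ T | ¬ IsCoprime r (u m)}.Finite := by
  have hunion : (⋃ M ∈ {M : Ideal R | M.IsMaximal ∧ r ∈ M}, {m ∈ T | u m ∈ M}).Finite :=
    (finite_setOf_isMaximal_mem hr).biUnion fun M hM => hu M hM.1
  refine hunion.subset ?_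
  rintro m ⟨hmT, hm⟩
  obtain ⟨M, hM, hrM, hmM⟩ := exists_isMaximal_mem_of_not_isCoprime hm
  exact Set.mem_iUnion₂.2 ⟨M, ⟨hM, hrM⟩, hmT, hmM⟩

end Coprimality

section PolynomialValues

variable {R K : Type*} [CommRing R] [CommRing K] [Algebra R K] [IsFractionRing R K]

theorem exists_algebraMap_eval_eq_mul_eval (A : K[X]) :
    ∃ c ∈ nonZeroDivisors R, ∃ B : R[X], ∀ m : R,
      algebraMap R K (B.eval m) = algebraMap R K c * A.eval (algebraMap R K m) := by
  obtain ⟨c, hc, hcA⟩ := IsLocalization.integerNormalization_spec (nonZeroDivisors R) A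
  refine ⟨c, hc, IsLocalization.integerNormalization (nonZeroDivisors R) A, fun m => ?_⟩
  rw [← eval_map_apply, hcA, eval_smul, Algebra.smul_def]

theorem exists_nonZeroDivisor_mem_span_pair_eval {P Q : K[X]} {v w : R → R}
    (hv : ∀ m, algebraMap R K (v m) = P.eval (algebraMap R K m))
    (hw : ∀ m, algebraMap R K (w m) = Q.eval (algebraMap R K m)) (hPQ : IsCoprime P Q) :
    ∃ d ∈ nonZeroDivisors R, ∀ m, d ∈ Ideal.span {v m, w m} := by
  obtain ⟨A, B, hAB⟩ := hPQ
  obtain ⟨c, hc, A', hA'⟩ := exists_algebraMap_eval_eq_mul_eval (R := R) A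
  obtain ⟨e, he, B', hB'⟩ := exists_algebraMap_eval_eq_mul_eval (R := R) B
  refine ⟨c * e, mul_mem hc he, fun m =>
    Ideal.mem_span_pair.2 ⟨e * A'.eval m, c * B'.eval m, IsFractionRing.injective R K ?_⟩⟩
  have hABm : A.eval (algebraMap R K m) * P.eval (algebraMap R K m) +
      B.eval (algebraMap R K m) * Q.eval (algebraMap R K m) = 1 := by
    rw [← eval_mul, ← eval_mul, ← eval_add, hAB, eval_one]
  simp only [map_add, map_mul, hA', hB', hv, hw]
  linear_combination (algebraMap R K c * algebraMap R K e) * hABm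

theorem finite_setOf_not_isCoprime_eval [Nontrivial R] [IsNoetherianRing R]
    [Ring.DimensionLEOne R] {P Q : K[X]} {v w : R → R} {T : Set R}
    (hv : ∀ m, algebraMap R K (v m) = P.eval (algebraMap R K m))
    (hw : ∀ m, algebraMap R K (w m) = Q.eval (algebraMap R K m)) (hPQ : IsCoprime P Q)
    (hT : T.Pairwise fun a b => IsCoprime (v a) (v b)) :
    {m ∈ T | ¬ IsCoprime (v m) (w m)}.Finite := by
  obtain ⟨d, hd, hspan⟩ := exists_nonZeroDivisor_mem_span_pair_eval hv hw hPQ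
  have hfinite : {m ∈ T | ¬ IsCoprime d (v m)}.Finite :=
    finite_setOf_not_isCoprime_of_finite_setOf_mem
      (fun M hM => (subsingleton_setOf_mem_of_pairwise_isCoprime hT hM.ne_top).finite)
      (nonZeroDivisors.ne_zero hd)
  exact hfinite.subset fun m hm => ⟨hm.1, mt (isCoprime_of_mem_span_pair (hspan m)) hm.2⟩

end PolynomialValues

section Product

variable {ι R : Type*} [Fintype ι] [CommRing R] [IsDomain R] [IsNoetherianRing R]
  [Ring.DimensionLEOne R]

theorem exists_infinite_subset_pairwise_isCoprime_prod {α : Type*} {T : Set α} {w : ι → α → R}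
    (hT : T.Infinite) (hw : ∀ i, T.Pairwise fun a b => IsCoprime (w i a) (w i b)) :
    ∃ S ⊆ T, S.Infinite ∧ S.Pairwise fun a b => IsCoprime (∏ i, w i a) (∏ i, w i b) := by
  have hzero : {m ∈ T | ∏ i, w i m = 0}.Finite :=
    finite_setOf_prod_mem_of_pairwise_isCoprime hw ⊥
  have : Std.Symm fun a b => IsCoprime (∏ i, w i a) (∏ i, w i b) := ⟨fun _ _ h => h.symm⟩
  obtain ⟨S, hST, hS, hScop⟩ := exists_infinite_subset_pairwise
    (r := fun a b => IsCoprime (∏ i, w i a) (∏ i, w i b)) (hT.sdiff hzero) fun a ha =>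
      (finite_setOf_not_isCoprime_of_finite_setOf_mem
        (fun M _ => finite_setOf_prod_mem_of_pairwise_isCoprime hw M)
        (fun h0 => ha.2 ⟨ha.1, h0⟩)).subset fun b hb => ⟨hb.1.1, hb.2⟩
  exact ⟨S, hST.trans Set.sdiff_subset, hS, hScop⟩

theorem stmt8_general {K : Type*} [Field K] [Algebra R K] [IsFractionRing R K]
    (P : ι → K[X]) (v : ι → R → R)
    (hval : ∀ i m, algebraMap R K (v i m) = (P i).eval (algebraMap R K m))
    {T : Set R} (hT : T.Infinite)
    (hTcop : ∀ i, T.Pairwise fun m₁ m₂ => IsCoprime (v i m₁) (v i m₂)) :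
    Ideal.span (Set.range fun m => ∏ i, v i m) = ⊤ ∧
    ∃ S ⊆ T, S.Infinite ∧
      (S.Pairwise fun m₁ m₂ => IsCoprime (∏ i, v i m₁) (∏ i, v i m₂)) ∧
      ∀ m ∈ S, ∀ i j, IsCoprime (P i) (P j) → IsCoprime (v i m) (v j m) := by
  have hspan : Ideal.span ((fun m => ∏ i, v i m) '' T) = ⊤ :=
    span_image_eq_top_of_finite_setOf_mem hT fun M _ =>
      finite_setOf_prod_mem_of_pairwise_isCoprime hTcop M
  have hbad : (⋃ i, ⋃ j, ⋃ _ : IsCoprime (P i) (P j),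
      {m ∈ T | ¬ IsCoprime (v i m) (v j m)}).Finite :=
    Set.finite_iUnion fun i => Set.finite_iUnion fun j => Set.finite_iUnion fun hij =>
      finite_setOf_not_isCoprime_eval (hval i) (hval j) hij (hTcop i)
  obtain ⟨S, hST, hS, hScop⟩ := exists_infinite_subset_pairwise_isCoprime_prod (hT.sdiff hbad)
    fun i => (hTcop i).mono Set.sdiff_subset
  refine ⟨eq_top_mono (Ideal.span_mono (Set.image_subset_range _ T)) hspan,
    S, hST.trans Set.sdiff_subset, hS, hScop, fun m hm i j hij => ?_⟩
  by_contra hncop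
  exact (hST hm).2 (Set.mem_iUnion₂.2 ⟨i, j, Set.mem_iUnion.2 ⟨hij, (hST hm).1, hncop⟩⟩)

end Product

/-- A partial converse to the main theorem: if `P_1, …, P_n ∈ K[X]` are
totally primitive (values witnessed by `v i : R → R`) and there is an infinite `T ⊆ R` on
which, for each `i`, the values of `P i` are pairwise coprime, then the product
`P = ∏ i, P i` is totally primitive, and there is an infinite `S ⊆ T` on which the values of
`P` are pairwise coprime, and `P i (m)` is coprime to `P j (m)` whenever `i ≠ j` and
`P i`, `P j` are coprime in `K[X]`. -/
theorem stmt8 {R K : Type*} [CommRing R] [IsDomain R] [IsPrincipalIdealRing R]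
    [Infinite R] [Field K] [Algebra R K] [IsFractionRing R K]
    (n : ℕ) (Pl : Fin n → K[X]) (v : Fin n → R → R)
    (hval : ∀ i m, algebraMap R K (v i m) = (Pl i).eval (algebraMap R K m))
    (htp : ∀ i, ∀ p : R, Prime p → ∃ m : R, ¬ p ∣ v i m)
    (T : Set R) (hT : T.Infinite)
    (hTcop : ∀ i, ∀ m₁ ∈ T, ∀ m₂ ∈ T, m₁ ≠ m₂ → IsCoprime (v i m₁) (v i m₂)) :
    (∀ p : R, Prime p → ∃ m : R, ¬ p ∣ ∏ i, v i m) ∧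
    ∃ S : Set R, S ⊆ T ∧ S.Infinite ∧
      (∀ m₁ ∈ S, ∀ m₂ ∈ S, m₁ ≠ m₂ → IsCoprime (∏ i, v i m₁) (∏ i, v i m₂)) ∧
      (∀ m ∈ S, ∀ i j : Fin n, i ≠ j → IsCoprime (Pl i) (Pl j) →
        IsCoprime (v i m) (v j m)) := by
  obtain ⟨hspan, S, hST, hS, hScop, hpair⟩ :=
    stmt8_general Pl v hval hT fun i _ h₁ _ h₂ => hTcop i _ h₁ _ h₂
  exact ⟨fun p hp => exists_not_dvd_of_span_range_eq_top hspan hp.not_isUnit,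
    S, hST, hS, fun _ h₁ _ h₂ => hScop h₁ h₂, fun m hm i j _ => hpair m hm i j⟩
end

section
/- Let R be an infinite principal ideal domain with fraction field K. Every nonzero polynomial Q ∈ K[X] can be written in the form Q(X) = (A/B)·P(X), where A, B ∈ R are nonzero and coprime and P ∈ K[X] is totally primitive; moreover A, B and P are uniquely determined up to multiplication by units of R. If in addition Q is integrally valued, then B is a unit of R. -/
open Polynomial

/-!
The values of `Q ∈ K[X]` on `R` span an `R`-submodule of `K`, which scales with `Q` and is a
fractional ideal because the coefficients of `Q` have a common denominator. Over a principal ideal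
domain it is therefore `R c` for some `c ∈ K`, and `c ≠ 0` because `Q` cannot vanish on the infinite
set `R`. A polynomial is totally primitive exactly when its values span `R`, so `Q = c' P` with `P`
totally primitive if and only if `R c' = R c`: the scalar is unique up to a unit of `R`, and `A / B`
is its reduced fraction. If `Q` is integrally valued, then `c ∈ R`, so `B` is a unit.
-/

open scoped Pointwise nonZeroDivisors

theorem span_eq_top_iff_forall_prime_exists_not_dvd {R : Type*} [CommRing R] [IsDomain R]
    [IsPrincipalIdealRing R] {s : Set R} (hs : ∃ x ∈ s, x ≠ 0) :
    Ideal.span s = ⊤ ↔ ∀ p : R, Prime p → ∃ x ∈ s, ¬ p ∣ x := by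
  have span_le_iff_dvd (p : R) : Ideal.span s ≤ Ideal.span {p} ↔ ∀ x ∈ s, p ∣ x := by
    simp only [Ideal.span_le, Set.subset_def, SetLike.mem_coe, Ideal.mem_span_singleton]
  constructor
  · intro htop p hp
    by_contra! hdvd
    rw [← span_le_iff_dvd, htop, top_le_iff, Ideal.span_singleton_eq_top] at hdvd
    exact hp.not_isUnit hdvd
  · intro hprime
    by_contra hne
    obtain ⟨M, hM, hsM⟩ := Ideal.exists_le_maximal _ hne
    obtain ⟨p, rfl⟩ := (IsPrincipalIdealRing.principal M).principal
    have hdvd := (span_le_iff_dvd p).1 hsM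
    obtain ⟨y, hy, hy0⟩ := hs
    have hp0 : p ≠ 0 := fun h => hy0 (zero_dvd_iff.1 (h ▸ hdvd y hy))
    obtain ⟨x, hx, hpx⟩ := hprime p ((Ideal.span_singleton_prime hp0).1 hM.isPrime)
    exact hpx (hdvd x hx)

theorem associated_num_den_of_span_singleton_eq {R K : Type*} [CommRing R] [IsDomain R]
    [UniqueFactorizationMonoid R] [Field K] [Algebra R K] [IsFractionRing R K] {c : K} {a b : R}
    (hb : b ≠ 0) (hab : IsRelPrime a b)
    (hspan : Submodule.span R {c} = Submodule.span R {algebraMap R K a / algebraMap R K b}) :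
    Associated (IsFractionRing.num R c) a ∧ Associated (IsFractionRing.den R c : R) b := by
  obtain ⟨u, hu⟩ := Submodule.span_singleton_eq_span_singleton.1 hspan.symm
  have hfrac : IsLocalization.mk' K (u * a) (⟨b, mem_nonZeroDivisors_of_ne_zero hb⟩ : R⁰) = c := by
    rw [IsFractionRing.mk'_eq_div, map_mul, mul_div_assoc, ← hu, Units.smul_def, Algebra.smul_def]
  obtain ⟨hnum, hden⟩ := IsFractionRing.num_den_unique R c (u * a) _
    ((isRelPrime_mul_unit_left_left u.isUnit).2 hab) hfrac
  exact ⟨hnum.trans (associated_unit_mul_left a u u.isUnit), hden⟩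

section CommSemiring

variable (R : Type*) {S : Type*} [CommSemiring R] [CommSemiring S] [Algebra R S]

/-- The `R`-submodule of `S` spanned by the values of `P ∈ S[X]` at the elements of `R`. It plays
the role of the content of `P`, with values in place of coefficients. -/
def valueModule (P : S[X]) : Submodule R S :=
  Submodule.span R (Set.range fun m : R => P.eval (algebraMap R S m))

/-- Total primitivity of `P ∈ S[X]` relative to `R`: the values of `P` on `R` lie in the image of
`R` and generate the unit ideal. Both conditions together say that these values span `R`. -/
def IsTotallyPrimitive (P : S[X]) : Prop :=
  valueModule R P = 1

variable {R}

theorem valueModule_C_mul (c : S) (P : S[X]) :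
    valueModule R (C c * P) = c • valueModule R P := by
  simp only [valueModule, eval_C_mul, Submodule.smul_span, ← Set.range_smul, smul_eq_mul]

theorem valueModule_le_one_iff {P : S[X]} :
    valueModule R P ≤ 1 ↔ ∀ m : R, ∃ r : R, algebraMap R S r = P.eval (algebraMap R S m) := by
  simp only [valueModule, Submodule.span_le, Set.range_subset_iff, SetLike.mem_coe,
    Submodule.mem_one]

theorem valueModule_eq_map_span_range {P : S[X]} {v : R → R}
    (hv : ∀ m, algebraMap R S (v m) = P.eval (algebraMap R S m)) :
    valueModule R P = Submodule.map (Algebra.linearMap R S) (Ideal.span (Set.range v)) := by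
  simp only [valueModule, Ideal.span, Submodule.map_span, ← Set.range_comp, Function.comp_def,
    Algebra.linearMap_apply, hv]

theorem IsTotallyPrimitive.valueModule_C_mul_eq_span {P : S[X]} (hP : IsTotallyPrimitive R P)
    (c : S) : valueModule R (C c * P) = Submodule.span R {c} := by
  rw [valueModule_C_mul, hP, Submodule.smul_one_eq_span]

theorem isTotallyPrimitive_iff_span_range_eq_top [FaithfulSMul R S] {P : S[X]} {v : R → R}
    (hv : ∀ m, algebraMap R S (v m) = P.eval (algebraMap R S m)) :
    IsTotallyPrimitive R P ↔ Ideal.span (Set.range v) = ⊤ := by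
  rw [IsTotallyPrimitive, valueModule_eq_map_span_range hv, Submodule.one_eq_range,
    LinearMap.range_eq_map]
  exact (Submodule.map_injective_of_injective (FaithfulSMul.algebraMap_injective R S)).eq_iff

end CommSemiring

theorem IsTotallyPrimitive.exists_unit_eq_C_mul {R S : Type*} [CommRing R] [IsDomain R]
    [CommRing S] [IsDomain S] [Algebra R S] [FaithfulSMul R S] {P P' : S[X]} {c c' : S}
    (hP : IsTotallyPrimitive R P) (hP' : IsTotallyPrimitive R P') (hc : c ≠ 0)
    (h : C c * P = C c' * P') : ∃ u : Rˣ, P' = C (algebraMap R S u) * P := by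
  have hspan : Submodule.span R {c'} = Submodule.span R {c} := by
    rw [← hP'.valueModule_C_mul_eq_span, ← hP.valueModule_C_mul_eq_span, h]
  obtain ⟨u, rfl⟩ := Submodule.span_singleton_eq_span_singleton.1 hspan
  refine ⟨u, mul_left_cancel₀ (C_ne_zero.2 (right_ne_zero_of_smul hc)) ?_⟩
  rw [← h, Units.smul_def, Algebra.smul_def, C_mul, mul_left_comm, mul_assoc]

theorem exists_eval_algebraMap_ne_zero (R : Type*) {S : Type*} [CommSemiring R] [Infinite R]
    [CommRing S] [IsDomain S] [Algebra R S] [FaithfulSMul R S] {P : S[X]} (hP : P ≠ 0) :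
    ∃ m : R, P.eval (algebraMap R S m) ≠ 0 := by
  by_contra! hzero
  refine hP (P.eq_zero_of_infinite_isRoot ?_)
  exact (Set.infinite_range_of_injective (FaithfulSMul.algebraMap_injective R S)).mono
    (Set.range_subset_iff.2 hzero)

theorem isTotallyPrimitive_iff_forall_prime {R S : Type*} [CommRing R] [IsDomain R]
    [IsPrincipalIdealRing R] [Infinite R] [CommRing S] [IsDomain S] [Algebra R S] [FaithfulSMul R S]
    {P : S[X]} (hP : P ≠ 0) {v : R → R}
    (hv : ∀ m, algebraMap R S (v m) = P.eval (algebraMap R S m)) :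
    IsTotallyPrimitive R P ↔ ∀ p : R, Prime p → ∃ m, ¬ p ∣ v m := by
  have hne : ∃ x ∈ Set.range v, x ≠ 0 := by
    obtain ⟨m, hm⟩ := exists_eval_algebraMap_ne_zero R hP
    refine ⟨v m, ⟨m, rfl⟩, fun h => hm ?_⟩
    rw [← hv, h, map_zero]
  rw [isTotallyPrimitive_iff_span_range_eq_top hv,
    span_eq_top_iff_forall_prime_exists_not_dvd hne]
  simp only [Set.exists_range_iff]

theorem isFractional_valueModule {R S : Type*} [CommRing R] [CommRing S] [Algebra R S]
    (M : Submonoid R) [IsLocalization M S] (Q : S[X]) : IsFractional M (valueModule R Q) := by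
  obtain ⟨b, hb, hbQ⟩ := IsLocalization.integerNormalization_spec M Q
  refine ⟨b, hb, fun x hx => ?_⟩
  induction hx using Submodule.span_induction with
  | mem x hx =>
    obtain ⟨m, rfl⟩ := hx
    refine ⟨(IsLocalization.integerNormalization M Q).eval m, ?_⟩
    rw [← eval_map_apply, hbQ, eval_smul]
  | zero => simpa only [smul_zero] using IsLocalization.isInteger_zero
  | add x y _ _ hx hy => exact smul_add b x y ▸ IsLocalization.isInteger_add hx hy
  | smul r x _ hx => exact smul_comm b r x ▸ IsLocalization.isInteger_smul hx

section PrincipalIdealRing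

variable (R : Type*) {K : Type*} [CommRing R] [IsDomain R] [IsPrincipalIdealRing R] [Field K]
  [Algebra R K] [IsFractionRing R K]

theorem exists_valueModule_eq_span_singleton (Q : K[X]) :
    ∃ c : K, valueModule R Q = Submodule.span R {c} :=
  (FractionalIdeal.isPrincipal ⟨valueModule R Q, isFractional_valueModule R⁰ Q⟩).principal

theorem exists_eq_C_mul_isTotallyPrimitive [Infinite R] {Q : K[X]} (hQ : Q ≠ 0) :
    ∃ (c : K) (P : K[X]), c ≠ 0 ∧ IsTotallyPrimitive R P ∧ Q = C c * P := by
  obtain ⟨c, hc⟩ := exists_valueModule_eq_span_singleton R Q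
  have hc0 : c ≠ 0 := by
    rintro rfl
    obtain ⟨m, hm⟩ := exists_eval_algebraMap_ne_zero R hQ
    have hmem : Q.eval (algebraMap R K m) ∈ valueModule R Q := Submodule.subset_span ⟨m, rfl⟩
    rw [hc, Submodule.span_zero_singleton, Submodule.mem_bot] at hmem
    exact hm hmem
  refine ⟨c, C c⁻¹ * Q, hc0, ?_, ?_⟩
  · rw [IsTotallyPrimitive, valueModule_C_mul, hc, ← Submodule.smul_one_eq_span,
      inv_smul_smul₀ hc0]
  · rw [← mul_assoc, ← C_mul, mul_inv_cancel₀ hc0, C_1, one_mul]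

end PrincipalIdealRing

/-- Every nonzero `Q ∈ K[X]` can be written `Q = (A/B)·P` with
`A, B ∈ R` nonzero and coprime and `P` totally primitive (integral values witnessed by
`v : R → R`); `A`, `B`, `P` are unique up to units of `R`; and if `Q` is integrally valued
then `B` is a unit. -/
theorem stmt10 {R K : Type*} [CommRing R] [IsDomain R] [IsPrincipalIdealRing R]
    [Infinite R] [Field K] [Algebra R K] [IsFractionRing R K]
    (Q : K[X]) (hQ : Q ≠ 0) :
    ∃ (A B : R) (P : K[X]) (v : R → R),
      A ≠ 0 ∧ B ≠ 0 ∧ IsCoprime A B ∧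
      (∀ m, algebraMap R K (v m) = P.eval (algebraMap R K m)) ∧
      (∀ p : R, Prime p → ∃ m : R, ¬ p ∣ v m) ∧
      Q = Polynomial.C (algebraMap R K A / algebraMap R K B) * P ∧
      ((∀ m : R, ∃ r : R, algebraMap R K r = Q.eval (algebraMap R K m)) → IsUnit B) ∧
      (∀ (A' B' : R) (P' : K[X]) (v' : R → R),
        A' ≠ 0 → B' ≠ 0 → IsCoprime A' B' →
        (∀ m, algebraMap R K (v' m) = P'.eval (algebraMap R K m)) →
        (∀ p : R, Prime p → ∃ m : R, ¬ p ∣ v' m) →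
        Q = Polynomial.C (algebraMap R K A' / algebraMap R K B') * P' →
        Associated A A' ∧ Associated B B' ∧
          ∃ u : Rˣ, P' = Polynomial.C (algebraMap R K (u : R)) * P) := by
  obtain ⟨c, P, hc, hP, hQP⟩ := exists_eq_C_mul_isTotallyPrimitive R hQ
  have hQc : valueModule R Q = Submodule.span R {c} := hQP ▸ hP.valueModule_C_mul_eq_span c
  choose v hv using valueModule_le_one_iff.1 hP.le
  refine ⟨IsFractionRing.num R c, IsFractionRing.den R c, P, v,
    (IsFractionRing.num_eq_zero c).not.2 hc, nonZeroDivisors.ne_zero (IsFractionRing.den R c).2,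
    (IsFractionRing.num_den_reduced R c).isCoprime, hv,
    (isTotallyPrimitive_iff_forall_prime (right_ne_zero_of_mul (hQP ▸ hQ)) hv).1 hP,
    by rwa [IsFractionRing.mk'_num_den'], fun hint => ?_, ?_⟩
  · rw [← valueModule_le_one_iff, hQc, Submodule.span_singleton_le_iff_mem,
      Submodule.mem_one] at hint
    exact (IsFractionRing.isUnit_den_iff c).2 hint
  · intro A' B' P' v' _ hB' hcop hv' hprime hQP'
    have hP' : IsTotallyPrimitive R P' :=
      (isTotallyPrimitive_iff_forall_prime (right_ne_zero_of_mul (hQP' ▸ hQ)) hv').2 hprime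
    have hspan := hQc.symm.trans (hQP' ▸ hP'.valueModule_C_mul_eq_span _)
    obtain ⟨hnum, hden⟩ := associated_num_den_of_span_singleton_eq hB' hcop.isRelPrime hspan
    exact ⟨hnum, hden, hP.exists_unit_eq_C_mul hP' hc (hQP.symm.trans hQP')⟩
end

section
/- Let R be an infinite principal ideal domain with fraction field K. Every nonconstant polynomial Q ∈ K[X] can be written, uniquely up to units of R and up to the order of the factors, in the form Q(X) = (A/(B·Γ)) · P_1(X)^{α_1} ⋯ P_n(X)^{α_n}, where A, B ∈ R are nonzero and coprime, each α_i ≥ 1, the P_i are pairwise non-associate totally primitive polynomials irreducible in K[X], and Γ ∈ R is a greatest common divisor of the value set {∏_i P_i(m)^{α_i} : m ∈ R}. -/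
open Polynomial

/-!
Dividing an integrally valued polynomial by a gcd of its values makes it totally primitive, so every
nonzero polynomial over `K` is a scalar multiple of a totally primitive one. That multiple is unique
up to a unit of `R`: if `P' = (a/b) P` in lowest terms, then `b` divides every value of `P` and `a`
every value of `P'`, so both are units. Totally primitive representatives of the irreducible factors
of `Q` thus give the decomposition, and unique factorization in `K[X]` gives its uniqueness: the
factors of two decompositions differ by units of `R`, hence so do the two gcds `Γ`, and comparing
scalars leaves an equality of two reduced fractions up to a unit.
-/

section GreatestCommonDivisor

variable {ι M R : Type*}

/-- `g` is a greatest common divisor of the (possibly infinite) family `f`. -/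
structure IsFamilyGCD [CommMonoid M] (f : ι → M) (g : M) : Prop where
  dvd : ∀ i, g ∣ f i
  dvd_of_forall_dvd : ∀ d, (∀ i, d ∣ f i) → d ∣ g

theorem exists_isFamilyGCD [CommRing R] [IsPrincipalIdealRing R] (f : ι → R) :
    ∃ g, IsFamilyGCD f g := by
  obtain ⟨g, hg⟩ := (IsPrincipalIdealRing.principal (Ideal.span (Set.range f))).principal
  have dvd_g_iff (d : R) : d ∣ g ↔ ∀ i, d ∣ f i := by
    rw [← Ideal.span_singleton_le_span_singleton, ← Ideal.submodule_span_eq (s := {g}), ← hg,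
      Ideal.span_le, Set.range_subset_iff]
    simp only [SetLike.mem_coe, Ideal.mem_span_singleton]
  exact ⟨g, (dvd_g_iff g).1 dvd_rfl, fun d => (dvd_g_iff d).2⟩

namespace IsFamilyGCD

theorem associated [CommMonoidWithZero M] [IsCancelMulZero M] {f : ι → M} {g g' : M}
    (h : IsFamilyGCD f g) (h' : IsFamilyGCD f g') : Associated g g' :=
  associated_of_dvd_dvd (h'.dvd_of_forall_dvd g h.dvd) (h.dvd_of_forall_dvd g' h'.dvd)

theorem units_mul [CommMonoid M] {f : ι → M} {g : M} (h : IsFamilyGCD f g) (u : Mˣ) :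
    IsFamilyGCD (fun i => u * f i) g where
  dvd i := (h.dvd i).mul_left _
  dvd_of_forall_dvd d hd := h.dvd_of_forall_dvd d fun i => Units.dvd_mul_left.1 (hd i)

theorem ne_zero [CommMonoidWithZero M] {f : ι → M} {g : M} (h : IsFamilyGCD f g) {i : ι}
    (hi : f i ≠ 0) : g ≠ 0 :=
  ne_zero_of_dvd_ne_zero hi (h.dvd i)

theorem isUnit_of_forall_dvd [CommMonoidWithZero M] [IsCancelMulZero M] {f w : ι → M} {g d : M}
    (h : IsFamilyGCD f g) (hg : g ≠ 0) (hf : ∀ i, f i = g * w i) (hd : ∀ i, d ∣ w i) :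
    IsUnit d := by
  have mul_dvd_self : g * d ∣ g * 1 := by
    rw [mul_one]
    exact h.dvd_of_forall_dvd _ fun i => hf i ▸ mul_dvd_mul_left g (hd i)
  exact isUnit_of_dvd_one ((mul_dvd_mul_iff_left hg).1 mul_dvd_self)

end IsFamilyGCD

end GreatestCommonDivisor

section ReducedFractions

theorem associated_and_associated_of_isRelPrime {M : Type*} [CommMonoidWithZero M]
    [IsCancelMulZero M] [DecompositionMonoid M] {a b a' b' : M} (hab : IsRelPrime a b)
    (hab' : IsRelPrime a' b') (h : Associated (a * b') (a' * b)) :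
    Associated a a' ∧ Associated b b' :=
  ⟨associated_of_dvd_dvd (hab.dvd_of_dvd_mul_right ((dvd_mul_right _ _).trans h.dvd))
      (hab'.dvd_of_dvd_mul_right ((dvd_mul_right _ _).trans h.symm.dvd)),
    associated_of_dvd_dvd (hab.symm.dvd_of_dvd_mul_left ((dvd_mul_left _ _).trans h.symm.dvd))
      (hab'.symm.dvd_of_dvd_mul_left ((dvd_mul_left _ _).trans h.dvd))⟩

theorem exists_isRelPrime_div_eq (R : Type*) {K : Type*} [CommRing R] [IsDomain R]
    [UniqueFactorizationMonoid R] [Field K] [Algebra R K] [IsFractionRing R K] (c : K) :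
    ∃ a b : R, b ≠ 0 ∧ IsRelPrime a b ∧ algebraMap R K a / algebraMap R K b = c := by
  obtain ⟨a, b, hab, hc⟩ := IsFractionRing.exists_reduced_fraction R c
  exact ⟨a, b, nonZeroDivisors.coe_ne_zero b, hab, by rw [← hc, IsFractionRing.mk'_eq_div]⟩

end ReducedFractions

section IrreducibleFactorSystems

variable {ι ι' M : Type*}

/-- The `P i` are pairwise non-associate irreducibles with positive exponents `α i`, so that
`∏ i, P i ^ α i` is a factorization into powers of distinct primes when `M` is factorial. -/
structure IsIrreducibleFactorSystem [Monoid M] (P : ι → M) (α : ι → ℕ) : Prop where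
  one_le : ∀ i, 1 ≤ α i
  irreducible : ∀ i, Irreducible (P i)
  not_associated : ∀ i j, i ≠ j → ¬ Associated (P i) (P j)

theorem exists_isIrreducibleFactorSystem [CommMonoidWithZero M] [UniqueFactorizationMonoid M]
    {a : M} (ha : a ≠ 0) :
    ∃ (n : ℕ) (P : Fin n → M) (α : Fin n → ℕ),
      IsIrreducibleFactorSystem P α ∧ Associated (∏ i, P i ^ α i) a := by
  classical
  let : StrongNormalizationMonoid M := UniqueFactorizationMonoid.strongNormalizationMonoid
  let s := UniqueFactorizationMonoid.normalizedFactors a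
  let e := s.toFinset.equivFin
  have mem (i) : (e.symm i : M) ∈ s := Multiset.mem_toFinset.1 (e.symm i).2
  refine ⟨_, fun i => e.symm i, fun i => s.count (e.symm i : M), ⟨fun i => ?_, fun i => ?_,
    fun i j hij hassoc => hij ?_⟩, ?_⟩
  · exact Multiset.one_le_count_iff_mem.2 (mem i)
  · exact UniqueFactorizationMonoid.irreducible_of_normalized_factor _ (mem i)
  · have normalize_eq (i) : normalize (e.symm i : M) = e.symm i :=
      UniqueFactorizationMonoid.normalize_normalized_factor _ (mem i)
    exact e.symm.injective (Subtype.ext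
      (hassoc.eq_of_normalized (normalize_eq i) (normalize_eq j)))
  · rw [Equiv.prod_comp e.symm (fun x => (x : M) ^ s.count (x : M)),
      Finset.prod_coe_sort s.toFinset (fun x => x ^ s.count x), ← Finset.prod_multiset_count]
    exact UniqueFactorizationMonoid.prod_normalizedFactors ha

namespace IsIrreducibleFactorSystem

theorem of_associated [Monoid M] {P P' : ι → M} {α : ι → ℕ}
    (h : IsIrreducibleFactorSystem P α) (hPP' : ∀ i, Associated (P i) (P' i)) :
    IsIrreducibleFactorSystem P' α where
  one_le := h.one_le
  irreducible i := (hPP' i).irreducible (h.irreducible i)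
  not_associated i j hij hassoc :=
    h.not_associated i j hij (((hPP' i).trans hassoc).trans (hPP' j).symm)

variable [CommMonoidWithZero M] [Fintype ι] {P : ι → M} {α : ι → ℕ}

theorem prod_ne_zero [Nontrivial M] [NoZeroDivisors M] (h : IsIrreducibleFactorSystem P α) :
    ∏ i, P i ^ α i ≠ 0 :=
  Finset.prod_ne_zero_iff.2 fun i _ => pow_ne_zero _ (h.irreducible i).ne_zero

variable [DecompositionMonoid M] [Fintype ι'] {P' : ι' → M} {α' : ι' → ℕ}

theorem exists_associated_of_prod_dvd (h : IsIrreducibleFactorSystem P α)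
    (h' : IsIrreducibleFactorSystem P' α')
    (hdvd : ∏ i, P i ^ α i ∣ ∏ j, P' j ^ α' j) (i : ι) :
    ∃ j, Associated (P i) (P' j) := by
  have hprime : Prime (P i) := (h.irreducible i).prime
  have dvd_prod : P i ∣ ∏ i, P i ^ α i :=
    (dvd_pow_self _ (Nat.one_le_iff_ne_zero.1 (h.one_le i))).trans
      (Finset.dvd_prod_of_mem (fun j => P j ^ α j) (Finset.mem_univ i))
  obtain ⟨j, -, hj⟩ := hprime.exists_mem_finset_dvd (dvd_prod.trans hdvd)
  exact ⟨j, (h.irreducible i).associated_of_dvd (h'.irreducible j) (hprime.dvd_of_dvd_pow hj)⟩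

variable [IsCancelMulZero M]

theorem emultiplicity_prod (h : IsIrreducibleFactorSystem P α) (i : ι) :
    emultiplicity (P i) (∏ j, P j ^ α j) = α i := by
  have hprime : Prime (P i) := (h.irreducible i).prime
  rw [Finset.emultiplicity_prod hprime, Finset.sum_eq_single i]
  · exact emultiplicity_pow_self hprime.ne_zero hprime.not_isUnit _
  · intro j _ hji
    refine emultiplicity_eq_zero.2 fun hdvd => h.not_associated i j hji.symm ?_
    exact (h.irreducible i).associated_of_dvd (h.irreducible j) (hprime.dvd_of_dvd_pow hdvd)
  · simp

theorem exists_equiv_of_associated_prod (h : IsIrreducibleFactorSystem P α)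
    (h' : IsIrreducibleFactorSystem P' α')
    (hassoc : Associated (∏ i, P i ^ α i) (∏ j, P' j ^ α' j)) :
    ∃ σ : ι ≃ ι', (∀ i, α' (σ i) = α i) ∧ ∀ i, Associated (P i) (P' (σ i)) := by
  choose f hf using h.exists_associated_of_prod_dvd h' hassoc.dvd
  choose g hg using h'.exists_associated_of_prod_dvd h hassoc.symm.dvd
  refine ⟨⟨f, g, fun i => ?_, fun j => ?_⟩, fun i => ?_, hf⟩
  · by_contra hne
    exact h.not_associated _ _ hne ((hf i).trans (hg _)).symm
  · by_contra hne
    exact h'.not_associated _ _ hne ((hg j).trans (hf _)).symm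
  · have multiplicities_eq : (α' (f i) : ℕ∞) = α i := by
      rw [← h.emultiplicity_prod, ← h'.emultiplicity_prod,
        emultiplicity_eq_of_associated_left (hf i), emultiplicity_eq_of_associated_right hassoc]
    exact_mod_cast multiplicities_eq

end IsIrreducibleFactorSystem

theorem prod_pow_eq_prod_pow_mul_of_equiv [CommMonoid M] [Fintype ι] [Fintype ι'] (σ : ι ≃ ι')
    {x u : ι → M} {x' : ι' → M} {α : ι → ℕ} {α' : ι' → ℕ} (hα : ∀ i, α' (σ i) = α i)
    (hx : ∀ i, x' (σ i) = u i * x i) :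
    ∏ j, x' j ^ α' j = (∏ i, u i ^ α i) * ∏ i, x i ^ α i := by
  rw [← Equiv.prod_comp σ, ← Finset.prod_mul_distrib]
  exact Finset.prod_congr rfl fun i _ => by rw [hα, hx, mul_pow]

end IrreducibleFactorSystems

section IntegralValues

/-- `P` is integrally valued, and `w` is its value function `R → R`. -/
def HasValues {R S : Type*} [CommSemiring R] [CommSemiring S] [Algebra R S] (P : S[X])
    (w : R → R) : Prop :=
  ∀ m, algebraMap R S (w m) = P.eval (algebraMap R S m)

namespace HasValues

variable {R S : Type*}

section Semiring

variable [CommSemiring R] [CommSemiring S] [Algebra R S] {P : S[X]} {w : R → R}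

theorem C_mul (h : HasValues P w) (r : R) :
    HasValues (C (algebraMap R S r) * P) fun m => r * w m := fun m => by
  rw [map_mul, h m, eval_mul, eval_C]

theorem prod_pow {ι : Type*} [Fintype ι] {P : ι → S[X]} {w : ι → R → R}
    (h : ∀ i, HasValues (P i) (w i)) (α : ι → ℕ) :
    HasValues (∏ i, P i ^ α i) fun m => ∏ i, w i m ^ α i := fun m => by
  rw [map_prod, eval_prod]
  exact Finset.prod_congr rfl fun i _ => by rw [map_pow, eval_pow, h i m]

theorem unique [FaithfulSMul R S] {w' : R → R} (h : HasValues P w) (h' : HasValues P w') :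
    w = w' :=
  funext fun m => FaithfulSMul.algebraMap_injective R S ((h m).trans (h' m).symm)

theorem associated_gcd_of_C_unit_mul [IsCancelMulZero R] [FaithfulSMul R S] {w' : R → R}
    {g g' : R} {u : Rˣ} (h : HasValues P w) (h' : HasValues (C (algebraMap R S u) * P) w')
    (hg : IsFamilyGCD w g) (hg' : IsFamilyGCD w' g') : Associated g g' := by
  rw [h'.unique (h.C_mul u)] at hg'
  exact (hg.units_mul u).associated hg'

end Semiring

section Domain

variable [CommSemiring R] [Infinite R] [CommRing S] [IsDomain S] [Algebra R S] [FaithfulSMul R S]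
  {P : S[X]} {w : R → R}

theorem exists_ne_zero (h : HasValues P w) (hP : P ≠ 0) : ∃ m, w m ≠ 0 := by
  by_contra! w_eq_zero
  refine hP (eq_zero_of_infinite_isRoot P ?_)
  refine (Set.infinite_range_of_injective (FaithfulSMul.algebraMap_injective R S)).mono ?_
  rintro _ ⟨m, rfl⟩
  rw [Set.mem_ofPred_eq, IsRoot.def, ← h m, w_eq_zero, map_zero]

theorem gcd_ne_zero (h : HasValues P w) (hP : P ≠ 0) {g : R} (hg : IsFamilyGCD w g) : g ≠ 0 :=
  have ⟨_, hm⟩ := h.exists_ne_zero hP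
  hg.ne_zero hm

end Domain

end HasValues

theorem exists_hasValues_C_mul {R S : Type*} [CommRing R] [CommRing S] [Algebra R S]
    (M : Submonoid R) [IsLocalization M S] (P : S[X]) :
    ∃ b ∈ M, ∃ w : R → R, HasValues (C (algebraMap R S b) * P) w := by
  obtain ⟨b, hb, hbP⟩ := IsLocalization.integerNormalization_spec M P
  refine ⟨b, hb, fun m => (IsLocalization.integerNormalization M P).eval m, fun m => ?_⟩
  rw [← eval_map_apply, hbP, Algebra.smul_def, Polynomial.algebraMap_apply]

end IntegralValues

section TotallyPrimitive

/-- `P` is totally primitive, with value function `w`. -/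
structure IsTotallyPrimitive_s12 {R S : Type*} [CommSemiring R] [CommSemiring S] [Algebra R S]
    (P : S[X]) (w : R → R) : Prop where
  hasValues : HasValues P w
  exists_not_dvd : ∀ p : R, Prime p → ∃ m, ¬ p ∣ w m

theorem HasValues.exists_isTotallyPrimitive_inv_mul {R K : Type*} [CommRing R] [IsDomain R]
    [Field K] [Algebra R K] [FaithfulSMul R K] {P : K[X]} {f : R → R} {g : R}
    (h : HasValues P f) (hgcd : IsFamilyGCD f g) (hg : g ≠ 0) :
    ∃ w : R → R, IsTotallyPrimitive_s12 (C (algebraMap R K g)⁻¹ * P) w := by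
  have algebraMap_g_ne_zero : algebraMap R K g ≠ 0 := by simpa using hg
  choose w hw using hgcd.dvd
  refine ⟨w, fun m => ?_, fun p hp => ?_⟩
  · rw [eval_mul, eval_C, ← h m, hw m, map_mul, inv_mul_cancel_left₀ algebraMap_g_ne_zero]
  · by_contra! p_dvd
    exact hp.not_isUnit (hgcd.isUnit_of_forall_dvd hg hw p_dvd)

theorem exists_associated_isTotallyPrimitive (R : Type*) {K : Type*} [CommRing R] [IsDomain R]
    [IsPrincipalIdealRing R] [Infinite R] [Field K] [Algebra R K] [IsFractionRing R K]
    {P : K[X]} (hP : P ≠ 0) :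
    ∃ (P' : K[X]) (w : R → R), Associated P P' ∧ IsTotallyPrimitive_s12 P' w := by
  have associated_C_mul {c : K} (hc : c ≠ 0) (F : K[X]) : Associated F (C c * F) :=
    associated_unit_mul_right F (C c) (isUnit_C.2 hc.isUnit)
  obtain ⟨b, hb, f, hf⟩ := exists_hasValues_C_mul (nonZeroDivisors R) P
  have assoc_b := associated_C_mul (IsFractionRing.to_map_ne_zero_of_mem_nonZeroDivisors hb) P
  obtain ⟨g, hgcd⟩ := exists_isFamilyGCD f
  have hg : g ≠ 0 := hf.gcd_ne_zero (assoc_b.ne_zero_iff.1 hP) hgcd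
  obtain ⟨w, hw⟩ := hf.exists_isTotallyPrimitive_inv_mul hgcd hg
  exact ⟨_, w, assoc_b.trans (associated_C_mul (by simpa using hg) _), hw⟩

namespace IsTotallyPrimitive_s12

theorem isUnit_of_forall_dvd {R S : Type*} [CommSemiring R]
    [UniqueFactorizationMonoid R] [Infinite R] [CommRing S] [IsDomain S] [Algebra R S]
    [FaithfulSMul R S] {P : S[X]} {w : R → R} (h : IsTotallyPrimitive_s12 P w) (hP : P ≠ 0) {d : R}
    (hd : ∀ m, d ∣ w m) : IsUnit d := by
  by_contra hunit
  obtain ⟨m₀, hm₀⟩ := h.hasValues.exists_ne_zero hP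
  obtain ⟨p, hp, hpd⟩ :=
    WfDvdMonoid.exists_irreducible_factor hunit (ne_zero_of_dvd_ne_zero hm₀ (hd m₀))
  obtain ⟨m, hm⟩ := h.exists_not_dvd p hp.prime
  exact hm (hpd.trans (hd m))

theorem exists_unit_of_associated {R K : Type*} [CommRing R] [IsDomain R]
    [UniqueFactorizationMonoid R] [Infinite R] [Field K] [Algebra R K] [IsFractionRing R K]
    {P P' : K[X]} {w w' : R → R} (h : IsTotallyPrimitive_s12 P w) (h' : IsTotallyPrimitive_s12 P' w')
    (hP : P ≠ 0) (hassoc : Associated P P') :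
    ∃ u : Rˣ, P' = C (algebraMap R K (u : R)) * P := by
  obtain ⟨v, rfl⟩ := hassoc
  obtain ⟨c, -, hcv⟩ := Polynomial.isUnit_iff.1 v.isUnit
  obtain ⟨a, b, hb, hab, rfl⟩ := exists_isRelPrime_div_eq R c
  have algebraMap_b_ne_zero : algebraMap R K b ≠ 0 := by simpa using hb
  have value_eq (m : R) : b * w' m = a * w m := by
    apply IsFractionRing.injective R K
    rw [map_mul, map_mul, h.hasValues, h'.hasValues, ← hcv, eval_mul, eval_C]
    field_simp
  obtain ⟨b, rfl⟩ : IsUnit b := h.isUnit_of_forall_dvd hP fun m =>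
    hab.symm.dvd_of_dvd_mul_left ⟨_, (value_eq m).symm⟩
  obtain ⟨a, rfl⟩ : IsUnit a := h'.isUnit_of_forall_dvd (mul_ne_zero hP v.ne_zero) fun m =>
    hab.dvd_of_dvd_mul_left ⟨_, value_eq m⟩
  have scalar_eq : algebraMap R K a / algebraMap R K b = algebraMap R K (a * b⁻¹ : Rˣ) := by
    rw [div_eq_iff algebraMap_b_ne_zero, ← map_mul, ← Units.val_mul, inv_mul_cancel_right]
  exact ⟨a * b⁻¹, by rw [← hcv, scalar_eq, mul_comm]⟩

end IsTotallyPrimitive_s12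

end TotallyPrimitive

section Factorization

variable {R K : Type*} [CommRing R] [Field K] [Algebra R K]

/-- The decomposition `Q = (A / (B Γ)) ∏ i, P i ^ α i` into totally primitive irreducibles; `w i` is
the value function of `P i`, so that `Γ` is a gcd of the values of the product. -/
structure IsTotallyPrimitiveFactorization {ι : Type*} [Fintype ι] (Q : K[X]) (A B Γ : R)
    (P : ι → K[X]) (α : ι → ℕ) (w : ι → R → R) : Prop
    extends IsIrreducibleFactorSystem P α where
  totallyPrimitive : ∀ i, IsTotallyPrimitive_s12 (P i) (w i)
  num_ne_zero : A ≠ 0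
  den_ne_zero : B ≠ 0
  isCoprime : IsCoprime A B
  isFamilyGCD : IsFamilyGCD (fun m => ∏ i, w i m ^ α i) Γ
  eq_C_mul_prod : Q = C (algebraMap R K A / (algebraMap R K B * algebraMap R K Γ)) *
    ∏ i, P i ^ α i

variable {ι ι' : Type*} [Fintype ι] [Fintype ι'] {Q : K[X]} {A B Γ A' B' Γ' : R}
  {P : ι → K[X]} {α : ι → ℕ} {w : ι → R → R} {P' : ι' → K[X]} {α' : ι' → ℕ} {w' : ι' → R → R}

namespace IsTotallyPrimitiveFactorization

theorem hasValues_prod (h : IsTotallyPrimitiveFactorization Q A B Γ P α w) :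
    HasValues (∏ i, P i ^ α i) fun m => ∏ i, w i m ^ α i :=
  HasValues.prod_pow (fun i => (h.totallyPrimitive i).hasValues) α

variable [Infinite R]

section FaithfulSMul

variable [FaithfulSMul R K]

theorem gcd_ne_zero (h : IsTotallyPrimitiveFactorization Q A B Γ P α w) : Γ ≠ 0 :=
  h.hasValues_prod.gcd_ne_zero h.prod_ne_zero h.isFamilyGCD

theorem associated_prod (h : IsTotallyPrimitiveFactorization Q A B Γ P α w) :
    Associated (∏ i, P i ^ α i) Q := by
  have scalar_ne_zero : algebraMap R K A / (algebraMap R K B * algebraMap R K Γ) ≠ 0 := by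
    simp [h.num_ne_zero, h.den_ne_zero, h.gcd_ne_zero]
  rw [h.eq_C_mul_prod]
  exact associated_unit_mul_right _ _ (isUnit_C.2 scalar_ne_zero.isUnit)

theorem associated_num_and_den [IsDomain R] [DecompositionMonoid R]
    (h : IsTotallyPrimitiveFactorization Q A B Γ P α w)
    (h' : IsTotallyPrimitiveFactorization Q A' B' Γ' P' α' w') {u : Rˣ}
    (hprod : ∏ j, P' j ^ α' j = C (algebraMap R K u) * ∏ i, P i ^ α i)
    (hΓΓ' : Associated Γ Γ') : Associated A A' ∧ Associated B B' := by
  have scalar_eq : algebraMap R K A / (algebraMap R K B * algebraMap R K Γ) =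
      algebraMap R K A' / (algebraMap R K B' * algebraMap R K Γ') * algebraMap R K u := by
    apply C_injective
    apply mul_right_cancel₀ h.prod_ne_zero
    rw [C_mul, mul_assoc, ← hprod, ← h.eq_C_mul_prod, ← h'.eq_C_mul_prod]
  have cross_mul : A * B' * Γ' = A' * B * Γ * u := by
    apply FaithfulSMul.algebraMap_injective R K
    have hB : algebraMap R K B ≠ 0 := by simpa using h.den_ne_zero
    have hB' : algebraMap R K B' ≠ 0 := by simpa using h'.den_ne_zero
    have hΓ : algebraMap R K Γ ≠ 0 := by simpa using h.gcd_ne_zero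
    have hΓ' : algebraMap R K Γ' ≠ 0 := by simpa using h'.gcd_ne_zero
    field_simp at scalar_eq
    simp only [map_mul]
    linear_combination scalar_eq
  have assoc_mul_gcd : Associated (A * B' * Γ') (A' * B * Γ) :=
    cross_mul ▸ associated_mul_unit_left _ _ u.isUnit
  exact associated_and_associated_of_isRelPrime h.isCoprime.isRelPrime h'.isCoprime.isRelPrime
    (assoc_mul_gcd.of_mul_right hΓΓ'.symm h'.gcd_ne_zero)

end FaithfulSMul

variable [IsDomain R] [UniqueFactorizationMonoid R] [IsFractionRing R K]

theorem exists_equiv (h : IsTotallyPrimitiveFactorization Q A B Γ P α w)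
    (h' : IsTotallyPrimitiveFactorization Q A' B' Γ' P' α' w') :
    ∃ σ : ι ≃ ι', (∀ i, α' (σ i) = α i) ∧
      ∀ i, ∃ u : Rˣ, P' (σ i) = C (algebraMap R K (u : R)) * P i := by
  obtain ⟨σ, hσ, hassoc⟩ := h.exists_equiv_of_associated_prod
    h'.toIsIrreducibleFactorSystem (h.associated_prod.trans h'.associated_prod.symm)
  exact ⟨σ, hσ, fun i => (h.totallyPrimitive i).exists_unit_of_associated
    (h'.totallyPrimitive (σ i)) (h.irreducible i).ne_zero (hassoc i)⟩

theorem unique (h : IsTotallyPrimitiveFactorization Q A B Γ P α w)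
    (h' : IsTotallyPrimitiveFactorization Q A' B' Γ' P' α' w') :
    Associated A A' ∧ Associated B B' ∧ Associated Γ Γ' ∧
      ∃ σ : ι ≃ ι', (∀ i, α' (σ i) = α i) ∧
        ∀ i, ∃ u : Rˣ, P' (σ i) = C (algebraMap R K (u : R)) * P i := by
  obtain ⟨σ, hσ, hunit⟩ := h.exists_equiv h'
  choose u hu using hunit
  have hprod : ∏ j, P' j ^ α' j =
      C (algebraMap R K (∏ i, u i ^ α i : Rˣ)) * ∏ i, P i ^ α i := by
    rw [prod_pow_eq_prod_pow_mul_of_equiv σ hσ hu]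
    simp only [Units.coe_prod, Units.val_pow_eq_pow_val, map_prod, map_pow]
  have hΓ : Associated Γ Γ' := h.hasValues_prod.associated_gcd_of_C_unit_mul
    (hprod ▸ h'.hasValues_prod) h.isFamilyGCD h'.isFamilyGCD
  obtain ⟨hA, hB⟩ := h.associated_num_and_den h' hprod hΓ
  exact ⟨hA, hB, hΓ, σ, hσ, fun i => ⟨u i, hu i⟩⟩

end IsTotallyPrimitiveFactorization

end Factorization

theorem exists_isTotallyPrimitiveFactorization (R : Type*) {K : Type*} [CommRing R] [IsDomain R]
    [IsPrincipalIdealRing R] [Infinite R] [Field K] [Algebra R K] [IsFractionRing R K]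
    {Q : K[X]} (hQ : Q ≠ 0) :
    ∃ (A B Γ : R) (n : ℕ) (P : Fin n → K[X]) (α : Fin n → ℕ) (w : Fin n → R → R),
      IsTotallyPrimitiveFactorization Q A B Γ P α w := by
  obtain ⟨n, P₀, α, hP₀, hprod₀⟩ := exists_isIrreducibleFactorSystem hQ
  choose P w hassoc hprim using fun i =>
    exists_associated_isTotallyPrimitive R (hP₀.irreducible i).ne_zero
  have hP : IsIrreducibleFactorSystem P α := hP₀.of_associated hassoc
  have hprod : Associated (∏ i, P i ^ α i) Q :=
    (Associated.prod _ _ _ fun i _ => (hassoc i).symm.pow_pow).trans hprod₀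
  obtain ⟨v, hv⟩ := hprod
  obtain ⟨c, hc, hcv⟩ := Polynomial.isUnit_iff.1 v.isUnit
  obtain ⟨Γ, hΓ⟩ := exists_isFamilyGCD fun m => ∏ i, w i m ^ α i
  have algebraMap_Γ_ne_zero : algebraMap R K Γ ≠ 0 := by
    simpa using (HasValues.prod_pow (fun i => (hprim i).hasValues) α).gcd_ne_zero
      hP.prod_ne_zero hΓ
  obtain ⟨A, B, hB, hAB, hfrac⟩ := exists_isRelPrime_div_eq R (c * algebraMap R K Γ)
  have hA : A ≠ 0 := by
    rintro rfl
    rw [map_zero, zero_div] at hfrac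
    exact mul_ne_zero hc.ne_zero algebraMap_Γ_ne_zero hfrac.symm
  refine ⟨A, B, Γ, n, P, α, w, hP, hprim, hA, hB, hAB.isCoprime, hΓ, ?_⟩
  rw [← div_div, hfrac, mul_div_cancel_right₀ _ algebraMap_Γ_ne_zero, hcv, mul_comm, hv]

/-- Every nonconstant `Q ∈ K[X]` can be written, uniquely up to units of
`R` and the order of the factors, as `Q = (A/(B·Γ)) · ∏ i, (P i)^(α i)` with `A, B ∈ R`
nonzero and coprime, `α i ≥ 1`, the `P i` pairwise non-associate totally primitive
polynomials irreducible in `K[X]` (integral values witnessed by `w i`), and `Γ ∈ R` a gcd of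
the value set `{∏ i, P i (m)^(α i) : m ∈ R}`. -/
theorem stmt12 {R K : Type*} [CommRing R] [IsDomain R] [IsPrincipalIdealRing R]
    [Infinite R] [Field K] [Algebra R K] [IsFractionRing R K]
    (Q : K[X]) (hnc : 0 < Q.natDegree) :
    ∃ (A B Γ : R) (n : ℕ) (Pl : Fin n → K[X]) (α : Fin n → ℕ) (w : Fin n → R → R),
      A ≠ 0 ∧ B ≠ 0 ∧ Γ ≠ 0 ∧ IsCoprime A B ∧ (∀ i, 1 ≤ α i) ∧
      (∀ i, Irreducible (Pl i)) ∧
      (∀ i m, algebraMap R K (w i m) = (Pl i).eval (algebraMap R K m)) ∧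
      (∀ i, ∀ p : R, Prime p → ∃ m : R, ¬ p ∣ w i m) ∧
      (∀ i j, i ≠ j → ¬ Associated (Pl i) (Pl j)) ∧
      Q = Polynomial.C (algebraMap R K A / (algebraMap R K B * algebraMap R K Γ)) *
            ∏ i, Pl i ^ α i ∧
      (∀ m : R, Γ ∣ ∏ i, w i m ^ α i) ∧
      (∀ d : R, (∀ m : R, d ∣ ∏ i, w i m ^ α i) → d ∣ Γ) ∧
      (∀ (A' B' Γ' : R) (n' : ℕ) (Pl' : Fin n' → K[X]) (α' : Fin n' → ℕ)
          (w' : Fin n' → R → R),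
        A' ≠ 0 → B' ≠ 0 → Γ' ≠ 0 → IsCoprime A' B' → (∀ i, 1 ≤ α' i) →
        (∀ i, Irreducible (Pl' i)) →
        (∀ i m, algebraMap R K (w' i m) = (Pl' i).eval (algebraMap R K m)) →
        (∀ i, ∀ p : R, Prime p → ∃ m : R, ¬ p ∣ w' i m) →
        (∀ i j, i ≠ j → ¬ Associated (Pl' i) (Pl' j)) →
        Q = Polynomial.C (algebraMap R K A' / (algebraMap R K B' * algebraMap R K Γ')) *
              ∏ i, Pl' i ^ α' i →
        (∀ m : R, Γ' ∣ ∏ i, w' i m ^ α' i) →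
        (∀ d : R, (∀ m : R, d ∣ ∏ i, w' i m ^ α' i) → d ∣ Γ') →
        Associated A A' ∧ Associated B B' ∧ Associated Γ Γ' ∧
          ∃ σ : Fin n ≃ Fin n', (∀ i, α' (σ i) = α i) ∧
            ∀ i, ∃ u : Rˣ, Pl' (σ i) = Polynomial.C (algebraMap R K (u : R)) * Pl i) := by
  have hQ : Q ≠ 0 := ne_zero_of_natDegree_gt hnc
  obtain ⟨A, B, Γ, n, P, α, w, h⟩ := exists_isTotallyPrimitiveFactorization R hQ
  refine ⟨A, B, Γ, n, P, α, w, h.num_ne_zero, h.den_ne_zero, h.gcd_ne_zero, h.isCoprime, h.one_le,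
    h.irreducible, fun i => (h.totallyPrimitive i).hasValues,
    fun i => (h.totallyPrimitive i).exists_not_dvd, h.not_associated, h.eq_C_mul_prod,
    h.isFamilyGCD.dvd, h.isFamilyGCD.dvd_of_forall_dvd, ?_⟩
  intro A' B' Γ' n' P' α' w' hA' hB' _ hAB' hα' hirr' hw' hprim' hna' hQ' hdvd' hgreatest'
  exact h.unique ⟨⟨hα', hirr', hna'⟩, fun i => ⟨hw' i, hprim' i⟩, hA', hB', hAB',
    ⟨hdvd', hgreatest'⟩, hQ'⟩
end

section
/- Let n ≥ 1 and let Q ∈ ℚ[X] be a polynomial such that for every k ∈ ℕ, Q(k) is an n-th power in ℚ (i.e., there exists r ∈ ℚ with Q(k) = r^n). Then Q is an n-th power in ℚ[X], i.e., there exists R ∈ ℚ[X] with Q = R^n. -/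
open Polynomial

/-!
Fix an irreducible factor `P` of `Q` and write `Q = P ^ e * S` with `P ∤ S`. A nonconstant integral
polynomial has roots modulo infinitely many primes (Schur), so there are a prime `p` and an integer
`a` with `p ∣ P(a)`, where `p` avoids the finitely many primes dividing a denominator or one of the
resultants of `P` with `P'` and with `S`. The root is then simple, so after replacing `a` by `a + p`
if necessary, `P(a)` has valuation exactly `1` and `S(a)` has valuation `0`. These valuations
persist for all `k ≡ a` modulo `p ^ 2`; if `Q(k)` is an `n`-th power for one such `k`, then `n ∣ e`.
Hence `Q` is a constant times an `n`-th power, and a single nonzero value shows that this constant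
is an `n`-th power as well.
-/

section Resultant

variable {R K : Type*} [CommRing R] [Field K] {f g : R[X]}

lemma resultant_ne_zero_of_isCoprime_map {φ : R →+* K} (hφ : Function.Injective φ)
    (hfg : IsCoprime (f.map φ) (g.map φ)) : f.resultant g ≠ 0 := by
  have hres := resultant_ne_zero _ _ hfg
  rw [natDegree_map_eq_of_injective hφ, natDegree_map_eq_of_injective hφ, resultant_map_map] at hres
  exact fun h ↦ hres (by rw [h, map_zero])

lemma dvd_resultant_of_dvd_eval (hf : f.natDegree ≠ 0) {p x : R} (hpf : p ∣ f.eval x)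
    (hpg : p ∣ g.eval x) : p ∣ f.resultant g := by
  obtain ⟨A, B, -, -, hAB⟩ := exists_mul_add_mul_eq_C_resultant f g le_rfl le_rfl (.inl hf)
  have hx : f.eval x * A.eval x + g.eval x * B.eval x = f.resultant g := by
    simpa only [eval_add, eval_mul, eval_C] using congrArg (eval x) hAB
  exact hx ▸ dvd_add (hpf.mul_right _) (hpg.mul_right _)

end Resultant

lemma exists_dvd_eval_and_not_sq_dvd_eval {R : Type*} [CommRing R] [IsDomain R] {f : R[X]}
    {p x : R} (hp : p ≠ 0) (hx : p ∣ f.eval x) (hx' : ¬ p ∣ f.derivative.eval x) :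
    ∃ a, p ∣ f.eval a ∧ ¬ p ^ 2 ∣ f.eval a := by
  by_cases hsq : p ^ 2 ∣ f.eval x
  · obtain ⟨z, hz⟩ := f.binomExpansion x p
    refine ⟨x + p, ?_, fun hdvd ↦ hx' ?_⟩
    · rw [hz]
      exact dvd_add (dvd_add hx (dvd_mul_left _ _)) ((dvd_pow_self _ two_ne_zero).mul_left _)
    · rw [hz, dvd_add_left (dvd_mul_left _ _), dvd_add_right hsq, sq] at hdvd
      exact (mul_dvd_mul_iff_right hp).1 hdvd
  · exact ⟨x, hx, hsq⟩

lemma exists_eval_add_mul_ne_zero {R : Type*} [CommRing R] [IsDomain R] [Infinite R] {f : R[X]}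
    (hf : f ≠ 0) (a : R) {b : R} (hb : b ≠ 0) : ∃ t, f.eval (a + b * t) ≠ 0 := by
  have hinj : Function.Injective fun t ↦ a + b * t :=
    (add_right_injective a).comp (mul_right_injective₀ hb)
  by_contra! hroot
  exact hf (eq_zero_of_infinite_isRoot f
    ((Set.infinite_range_of_injective hinj).mono (Set.range_subset_iff.2 hroot)))

lemma exists_prime_not_dvd_and_dvd_eval {f : ℤ[X]} (hf : f.natDegree ≠ 0) {D : ℤ} (hD : D ≠ 0) :
    ∃ p : ℕ, p.Prime ∧ ¬ (p : ℤ) ∣ D ∧ ∃ x : ℤ, (p : ℤ) ∣ f.eval x := by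
  have hfC (c : ℤ) : f - C c ≠ 0 := fun h ↦ hf (by rw [sub_eq_zero.1 h, natDegree_C])
  obtain ⟨a, ha⟩ : ∃ a, f.eval a ≠ 0 := by
    simpa using exists_eval_add_mul_ne_zero (hfC 0) 0 one_ne_zero
  set c := f.eval a
  obtain ⟨t, ht⟩ :=
    exists_eval_add_mul_ne_zero (mul_ne_zero (hfC c) (hfC (-c))) a (mul_ne_zero ha hD)
  -- Modulo `c * D`, the value at `a + c * D * t` is `c`, so its cofactor is coprime to `D`.
  obtain ⟨z, hz⟩ : c * D * t ∣ f.eval (a + c * D * t) - c := by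
    simpa using sub_dvd_eval_sub (a + c * D * t) a f
  have hval : f.eval (a + c * D * t) = c * (1 + D * (t * z)) := by linear_combination hz
  have hunit : (1 + D * (t * z)).natAbs ≠ 1 := by
    intro h
    rw [eval_mul, eval_sub, eval_sub, eval_C, eval_C, hval] at ht
    rcases Int.natAbs_eq_iff.1 h with h | h <;> simp [h] at ht
  obtain ⟨p, hp, hpdvd⟩ := Nat.exists_prime_and_dvd hunit
  rw [← Int.natCast_dvd] at hpdvd
  refine ⟨p, hp, fun hpD ↦ ?_, _, hval ▸ hpdvd.mul_left c⟩
  exact (Nat.prime_iff_prime_int.1 hp).not_dvd_one ((dvd_add_left (hpD.mul_right _)).1 hpdvd)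

lemma exists_prime_forall_modEq_dvd_eval_and_not_dvd_eval {f g : ℤ[X]} (hf : f.natDegree ≠ 0)
    (hsep : (f.map (algebraMap ℤ ℚ)).Separable)
    (hfg : IsCoprime (f.map (algebraMap ℤ ℚ)) (g.map (algebraMap ℤ ℚ))) :
    ∃ p : ℕ, p.Prime ∧ ∃ a : ℤ, ∀ k : ℤ, k ≡ a [ZMOD p ^ 2] →
      (p : ℤ) ∣ f.eval k ∧ ¬ (p : ℤ) ^ 2 ∣ f.eval k ∧ ¬ (p : ℤ) ∣ g.eval k := by
  have hinj : Function.Injective (algebraMap ℤ ℚ) := Int.cast_injective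
  have hdisc : f.resultant f.derivative ≠ 0 :=
    resultant_ne_zero_of_isCoprime_map hinj (derivative_map f (algebraMap ℤ ℚ) ▸ hsep)
  have hres : f.resultant g ≠ 0 := resultant_ne_zero_of_isCoprime_map hinj hfg
  obtain ⟨p, hp, hpD, x, hx⟩ := exists_prime_not_dvd_and_dvd_eval hf (mul_ne_zero hdisc hres)
  have hx' : ¬ (p : ℤ) ∣ f.derivative.eval x := fun h ↦
    hpD ((dvd_resultant_of_dvd_eval hf hx h).mul_right _)
  obtain ⟨a, ha, hsq⟩ :=
    exists_dvd_eval_and_not_sq_dvd_eval (Int.natCast_ne_zero.2 hp.ne_zero) hx hx'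
  refine ⟨p, hp, a, fun k hk ↦ ?_⟩
  have hsub : (p : ℤ) ^ 2 ∣ f.eval k - f.eval a := hk.symm.dvd.trans (sub_dvd_eval_sub k a f)
  have hkf : (p : ℤ) ∣ f.eval k :=
    (dvd_iff_dvd_of_dvd_sub ((dvd_pow_self _ two_ne_zero).trans hsub)).2 ha
  exact ⟨hkf, mt (dvd_iff_dvd_of_dvd_sub hsub).1 hsq,
    fun h ↦ hpD ((dvd_resultant_of_dvd_eval hf hkf h).mul_left _)⟩

lemma exists_ne_zero_map_eq_C_mul {R K : Type*} [CommRing R] [IsDomain R] [Field K] [Algebra R K]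
    [IsFractionRing R K] (P : K[X]) :
    ∃ d : R, d ≠ 0 ∧ ∃ f : R[X], f.map (algebraMap R K) = C (algebraMap R K d) * P := by
  obtain ⟨d, hd, hf⟩ := IsLocalization.integerNormalization_spec (nonZeroDivisors R) P
  exact ⟨d, nonZeroDivisors.ne_zero hd, _, by rw [hf, algebra_compatible_smul K, smul_eq_C_mul]⟩

lemma eval_intCast_eq_div_of_map_eq_C_mul {P : ℚ[X]} {f : ℤ[X]} {d : ℤ} (hd : d ≠ 0)
    (hf : f.map (algebraMap ℤ ℚ) = C (algebraMap ℤ ℚ d) * P) (k : ℤ) :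
    P.eval (k : ℚ) = ((f.eval k : ℤ) : ℚ) / d := by
  have hk := congrArg (eval (k : ℚ)) hf
  rw [eval_intCast_map, eval_mul, eval_C] at hk
  rw [eq_div_iff (Int.cast_ne_zero.2 hd), mul_comm]
  exact hk.symm

section PadicValuation

variable {p : ℕ} [Fact p.Prime]

lemma padicValRat_intCast_div_of_not_dvd {u d : ℤ} (hu : u ≠ 0) (hd : ¬ (p : ℤ) ∣ d) :
    padicValRat p (u / d) = padicValInt p u := by
  have hd0 : d ≠ 0 := fun h ↦ hd (h ▸ dvd_zero _)
  rw [padicValRat.div (Int.cast_ne_zero.2 hu) (Int.cast_ne_zero.2 hd0), padicValRat.of_int,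
    padicValRat.of_int, padicValInt.eq_zero_of_not_dvd hd, Nat.cast_zero, sub_zero]

lemma padicValInt_eq_one_of_dvd_of_not_sq_dvd {u : ℤ} (h₁ : (p : ℤ) ∣ u)
    (h₂ : ¬ (p : ℤ) ^ 2 ∣ u) : padicValInt p u = 1 := by
  rw [← pow_one (p : ℤ)] at h₁
  rw [padicValInt_dvd_iff] at h₁ h₂
  grind

lemma dvd_of_pow_mul_eq_pow_of_padicValRat {x y r : ℚ} {e n : ℕ} (hx : padicValRat p x = 1)
    (hy₀ : y ≠ 0) (hy : padicValRat p y = 0) (h : x ^ e * y = r ^ n) : n ∣ e := by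
  have hx₀ : x ≠ 0 := by
    rintro rfl
    simp at hx
  have hval := congrArg (padicValRat p) h
  rw [padicValRat.mul (pow_ne_zero e hx₀) hy₀, padicValRat.pow, padicValRat.pow, hx, hy, mul_one,
    add_zero] at hval
  exact Int.natCast_dvd_natCast.1 ⟨_, hval⟩

end PadicValuation

lemma exists_prime_forall_modEq_padicValRat_eval {P S : ℚ[X]} (hP : Irreducible P)
    (hPS : ¬ P ∣ S) :
    ∃ p : ℕ, p.Prime ∧ ∃ a : ℤ, ∀ k : ℤ, k ≡ a [ZMOD p ^ 2] →
      padicValRat p (P.eval (k : ℚ)) = 1 ∧ S.eval (k : ℚ) ≠ 0 ∧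
        padicValRat p (S.eval (k : ℚ)) = 0 := by
  obtain ⟨d, hd, f, hf⟩ := exists_ne_zero_map_eq_C_mul (R := ℤ) P
  obtain ⟨d', hd', g, hg⟩ := exists_ne_zero_map_eq_C_mul (R := ℤ) S
  have hunit {c : ℤ} (hc : c ≠ 0) : IsUnit (C (algebraMap ℤ ℚ c)) :=
    isUnit_C.2 (Int.cast_ne_zero.2 hc).isUnit
  have hfP : Associated P (f.map (algebraMap ℤ ℚ)) :=
    hf ▸ (associated_unit_mul_left P _ (hunit hd)).symm
  have hirr : Irreducible (f.map (algebraMap ℤ ℚ)) := hfP.irreducible hP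
  -- The constant factor makes the prime avoid the denominators of `P` and `S` too.
  have hcop : IsCoprime (f.map (algebraMap ℤ ℚ)) ((C (d * d') * g).map (algebraMap ℤ ℚ)) := by
    rw [Polynomial.map_mul, map_C, hg, isCoprime_mul_unit_left_right (hunit (mul_ne_zero hd hd')),
      isCoprime_mul_unit_left_right (hunit hd'), hirr.coprime_iff_not_dvd, ← hfP.dvd_iff_dvd_left]
    exact hPS
  have hdeg : f.natDegree ≠ 0 := (hirr.natDegree_pos.trans_le natDegree_map_le).ne'
  obtain ⟨p, hp, a, hdvd⟩ :=
    exists_prime_forall_modEq_dvd_eval_and_not_dvd_eval hdeg hirr.separable hcop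
  have := Fact.mk hp
  refine ⟨p, hp, a, fun k hk ↦ ?_⟩
  obtain ⟨hkf, hksq, hkg⟩ := hdvd k hk
  rw [eval_mul, eval_C] at hkg
  have hpd : ¬ (p : ℤ) ∣ d := fun h ↦ hkg ((h.mul_right _).mul_right _)
  have hpd' : ¬ (p : ℤ) ∣ d' := fun h ↦ hkg ((h.mul_left _).mul_right _)
  have hpg : ¬ (p : ℤ) ∣ g.eval k := fun h ↦ hkg (h.mul_left _)
  have hfk : f.eval k ≠ 0 := fun h ↦ hksq (h ▸ dvd_zero _)
  have hgk : g.eval k ≠ 0 := fun h ↦ hpg (h ▸ dvd_zero _)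
  rw [eval_intCast_eq_div_of_map_eq_C_mul hd hf, eval_intCast_eq_div_of_map_eq_C_mul hd' hg,
    padicValRat_intCast_div_of_not_dvd hfk hpd, padicValRat_intCast_div_of_not_dvd hgk hpd',
    padicValInt_eq_one_of_dvd_of_not_sq_dvd hkf hksq, padicValInt.eq_zero_of_not_dvd hpg]
  exact ⟨rfl, div_ne_zero (Int.cast_ne_zero.2 hgk) (Int.cast_ne_zero.2 hd'), rfl⟩

lemma exists_associated_pow_of_forall_dvd_multiplicity {α : Type*} [CommMonoidWithZero α]
    [UniqueFactorizationMonoid α] {n : ℕ} {x : α} (hx : x ≠ 0)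
    (h : ∀ p, Irreducible p → n ∣ multiplicity p x) : ∃ y, Associated (y ^ n) x := by
  classical
  let _ := UniqueFactorizationMonoid.strongNormalizationMonoid (α := α)
  obtain ⟨s, hs⟩ := (UniqueFactorizationMonoid.normalizedFactors x).exists_smul_of_dvd_count
    fun p hp ↦ by
      have hirr := UniqueFactorizationMonoid.irreducible_of_normalized_factor p hp
      have hdvd := h p hirr
      rwa [UniqueFactorizationMonoid.multiplicity_eq_count_normalizedFactors hirr hx,
        UniqueFactorizationMonoid.normalize_normalized_factor p hp] at hdvd
  refine ⟨s.prod, ?_⟩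
  rw [← Multiset.prod_nsmul, ← hs]
  exact UniqueFactorizationMonoid.prod_normalizedFactors hx

section PowerValues

variable {n : ℕ} {Q : ℚ[X]}

lemma dvd_multiplicity_of_forall_exists_modEq_eval_eq_pow
    (h : ∀ m : ℕ, 0 < m → ∀ a : ℤ, ∃ k : ℤ, k ≡ a [ZMOD m] ∧ ∃ r : ℚ, Q.eval (k : ℚ) = r ^ n)
    (hQ : Q ≠ 0) {P : ℚ[X]} (hP : Irreducible P) : n ∣ multiplicity P Q := by
  obtain ⟨S, hS, hPS⟩ :=
    (FiniteMultiplicity.of_not_isUnit hP.not_isUnit hQ).exists_eq_pow_mul_and_not_dvd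
  obtain ⟨p, hp, a, hval⟩ := exists_prime_forall_modEq_padicValRat_eval hP hPS
  obtain ⟨k, hk, r, hr⟩ := h (p ^ 2) (pow_pos hp.pos 2) a
  obtain ⟨hPk, hSk₀, hSk⟩ := hval k (by exact_mod_cast hk)
  have := Fact.mk hp
  rw [hS, eval_mul, eval_pow] at hr
  exact dvd_of_pow_mul_eq_pow_of_padicValRat hPk hSk₀ hSk hr

lemma exists_eval_ne_zero_and_eval_eq_pow
    (h : ∀ m : ℕ, 0 < m → ∀ a : ℤ, ∃ k : ℤ, k ≡ a [ZMOD m] ∧ ∃ r : ℚ, Q.eval (k : ℚ) = r ^ n)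
    (hQ : Q ≠ 0) : ∃ x r : ℚ, Q.eval x ≠ 0 ∧ Q.eval x = r ^ n := by
  obtain ⟨c, hc⟩ : ∃ c, ¬ Q.IsRoot c := by
    simpa using exists_eval_add_mul_ne_zero hQ 0 one_ne_zero
  obtain ⟨p, hp, a, hval⟩ :=
    exists_prime_forall_modEq_padicValRat_eval (irreducible_X_sub_C c) (mt dvd_iff_isRoot.1 hc)
  obtain ⟨k, hk, r, hr⟩ := h (p ^ 2) (pow_pos hp.pos 2) a
  exact ⟨k, r, (hval k (by exact_mod_cast hk)).2.1, hr⟩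

end PowerValues

lemma exists_eq_pow_of_associated_pow {K : Type*} [Field K] {n : ℕ} {Q R : K[X]} {x r : K}
    (hR : Associated (R ^ n) Q) (hx : Q.eval x ≠ 0) (hr : Q.eval x = r ^ n) :
    ∃ T : K[X], Q = T ^ n := by
  obtain ⟨u, rfl⟩ := hR
  obtain ⟨c, -, hc⟩ := isUnit_iff.1 u.isUnit
  rw [← hc, eval_mul, eval_pow, eval_C] at hx hr
  have hcpow : c = (r / R.eval x) ^ n := by
    rw [div_pow, ← hr, mul_div_cancel_left₀ c (left_ne_zero_of_mul hx)]
  exact ⟨R * C (r / R.eval x), by rw [← hc, mul_pow, ← C_pow, ← hcpow]⟩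

theorem stmt15_general (n : ℕ) (Q : ℚ[X])
    (h : ∀ m : ℕ, 0 < m → ∀ a : ℤ, ∃ k : ℤ, k ≡ a [ZMOD m] ∧ ∃ r : ℚ, Q.eval (k : ℚ) = r ^ n) :
    ∃ R : ℚ[X], Q = R ^ n := by
  obtain rfl | hQ := eq_or_ne Q 0
  · obtain ⟨_, -, r, hr⟩ := h 1 one_pos 0
    exact ⟨C r, by rw [← C_pow, ← hr, eval_zero, C_0]⟩
  obtain ⟨R, hR⟩ := exists_associated_pow_of_forall_dvd_multiplicity hQ fun _ hP ↦
    dvd_multiplicity_of_forall_exists_modEq_eval_eq_pow h hQ hP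
  obtain ⟨x, r, hx, hr⟩ := exists_eval_ne_zero_and_eval_eq_pow h hQ
  exact exists_eq_pow_of_associated_pow hR hx hr

/-- If `n ≥ 1` and `Q ∈ ℚ[X]` is such that `Q(k)` is an `n`-th power in
`ℚ` for every natural number `k`, then `Q` is an `n`-th power in `ℚ[X]`. -/
theorem stmt15 (n : ℕ) (hn : 1 ≤ n) (Q : ℚ[X])
    (h : ∀ k : ℕ, ∃ r : ℚ, Q.eval (k : ℚ) = r ^ n) :
    ∃ R : ℚ[X], Q = R ^ n := by
  refine stmt15_general n Q fun m hm a ↦ ⟨a % m, Int.mod_modEq a m, ?_⟩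
  lift a % m to ℕ using Int.emod_nonneg a (by lia) with k
  exact h k
end

section
/- Let P_1, …, P_n ∈ ℚ[X] be totally primitive polynomials (with respect to ℤ), and suppose there exists an infinite set S ⊆ ℕ such that for every m ∈ S and every i, P_i(m) is a prime number. Then each P_i is nonconstant, irreducible in ℚ[X], and has positive leading coefficient, and the product P_1·P_2⋯P_n is totally primitive. -/
open Polynomial

/-!
A nonconstant polynomial takes each value only finitely often, and a nonzero integer has only
finitely many divisors; so the values of a nonconstant polynomial divide a fixed nonzero integer
at only finitely many integers.

If `P = A * B` with `A` and `B` nonconstant, choose nonzero integers `d`, `e` such that `d * A` and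
`e * B` take integer values. Whenever `P m` is prime, `d * A m` or `e * B m` divides `d * e`, which
happens only finitely often: hence irreducibility. Likewise, if a prime `p` divides `∏ i, P i m` and
each `P i m` is prime, then some `P i m` divides `p`, which again happens only finitely often.
-/

theorem dvd_or_dvd_of_mul_eq_prime_mul {M : Type*} [CommMonoidWithZero M] [IsCancelMulZero M]
    {a b p c : M} (hp : Prime p) (h : a * b = p * c) : a ∣ c ∨ b ∣ c := by
  rcases hp.left_dvd_or_dvd_right_of_dvd_mul (Dvd.intro b h) with ⟨k, rfl⟩ | hac
  · have hkb : k * b = c := mul_left_cancel₀ hp.ne_zero ((mul_assoc p k b).symm.trans h)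
    exact .inr (Dvd.intro_left k hkb)
  · exact .inl hac

theorem finite_setOf_dvd {M : Type*} [CommMonoidWithZero M] [UniqueFactorizationMonoid M]
    [Finite Mˣ] {c : M} (hc : c ≠ 0) : {a : M | a ∣ c}.Finite := by
  have := Fintype.ofFinite Mˣ
  have := UniqueFactorizationMonoid.fintypeSubtypeDvd c hc
  exact Set.finite_coe_iff.mp (Finite.of_fintype {a // a ∣ c})

theorem natDegree_pos_of_eval_ne {R : Type*} [Semiring R] {P : R[X]} {x y : R}
    (h : P.eval x ≠ P.eval y) : 0 < P.natDegree := by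
  by_contra! hdeg
  rw [eq_C_of_natDegree_le_zero hdeg, eval_C, eval_C] at h
  exact h rfl

theorem finite_preimage_eval {R : Type*} [CommRing R] [IsDomain R] {P : R[X]}
    (hP : 0 < P.natDegree) {T : Set R} (hT : T.Finite) : (P.eval ⁻¹' T).Finite := by
  refine hT.preimage' fun a _ ↦ ?_
  have hPa : P ≠ C a := fun h ↦ hP.ne' (h ▸ natDegree_C a)
  exact preimage_eval_singleton hPa ▸ rootSet_finite _ _

theorem leadingCoeff_pos_of_frequently_eval_nonneg {K : Type*} [NormedField K] [LinearOrder K]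
    [IsStrictOrderedRing K] [OrderTopology K] {P : K[X]} (hP : 0 < P.natDegree)
    (h : ∃ᶠ x in Filter.atTop, 0 ≤ P.eval x) : 0 < P.leadingCoeff := by
  by_contra! hlead
  have hlim := P.tendsto_atBot_of_leadingCoeff_nonpos (natDegree_pos_iff_degree_pos.mp hP) hlead
  exact h ((hlim.eventually_lt_atBot 0).mono fun _ ↦ not_le.mpr)

theorem exists_ne_zero_forall_exists_algebraMap_eq_eval_smul (R : Type*) {K : Type*} [CommRing R]
    [Nontrivial R] [CommRing K] [Algebra R K] [IsFractionRing R K] (P : K[X]) :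
    ∃ d : R, d ≠ 0 ∧ ∀ x : R, ∃ y : R,
      algebraMap R K y = (d • P).eval (algebraMap R K x) := by
  obtain ⟨d, hd, hmap⟩ := IsLocalization.integerNormalization_spec (nonZeroDivisors R) P
  refine ⟨d, nonZeroDivisors.ne_zero hd, fun x ↦
    ⟨(IsLocalization.integerNormalization (nonZeroDivisors R) P).eval x, ?_⟩⟩
  rw [← eval_map_apply, hmap]

section PrimeValues

variable {R K : Type*} [CommRing R] [UniqueFactorizationMonoid R] [Finite Rˣ]

theorem finite_setOf_eval_dvd [CommRing K] [IsDomain K] [Algebra R K] [FaithfulSMul R K] {P : K[X]}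
    (hP : 0 < P.natDegree) {c : R} (hc : c ≠ 0) :
    {m : R | ∃ a, a ∣ c ∧ algebraMap R K a = P.eval (algebraMap R K m)}.Finite := by
  have hvalues : (algebraMap R K '' {a | a ∣ c}).Finite := (finite_setOf_dvd hc).image _
  have hpreimage := finite_preimage_eval hP hvalues
  exact (hpreimage.preimage (FaithfulSMul.algebraMap_injective R K).injOn).subset fun _ hm ↦ hm

theorem irreducible_of_infinite_prime_values [IsDomain R] [Field K] [Algebra R K]
    [IsFractionRing R K] {P : K[X]} (hP : 0 < P.natDegree) {S : Set R} (hS : S.Infinite)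
    (hprime : ∀ m ∈ S, ∃ p, Prime p ∧ algebraMap R K p = P.eval (algebraMap R K m)) :
    Irreducible P := by
  have hP0 : P ≠ 0 := ne_zero_of_natDegree_gt hP
  refine ⟨fun hunit ↦ hP.ne' (natDegree_eq_zero_of_isUnit hunit), fun A B hAB ↦ ?_⟩
  by_contra! hnonunit
  have hA : 0 < A.natDegree := natDegree_pos_iff_degree_pos.mpr <|
    degree_pos_of_ne_zero_of_nonunit (left_ne_zero_of_mul (hAB ▸ hP0)) hnonunit.1
  have hB : 0 < B.natDegree := natDegree_pos_iff_degree_pos.mpr <|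
    degree_pos_of_ne_zero_of_nonunit (right_ne_zero_of_mul (hAB ▸ hP0)) hnonunit.2
  obtain ⟨d, hd, hdA⟩ := exists_ne_zero_forall_exists_algebraMap_eq_eval_smul R A
  obtain ⟨e, he, heB⟩ := exists_ne_zero_forall_exists_algebraMap_eq_eval_smul R B
  have hdA_deg : 0 < (d • A).natDegree := by rwa [natDegree_smul A hd]
  have heB_deg : 0 < (e • B).natDegree := by rwa [natDegree_smul B he]
  have hde : d * e ≠ 0 := mul_ne_zero hd he
  refine hS (((finite_setOf_eval_dvd hdA_deg hde).union (finite_setOf_eval_dvd heB_deg hde)).subset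
    fun m hm ↦ ?_)
  obtain ⟨p, hp, hpm⟩ := hprime m hm
  obtain ⟨a, ha⟩ := hdA m
  obtain ⟨b, hb⟩ := heB m
  have hab : a * b = p * (d * e) := by
    apply IsFractionRing.injective R K
    rw [map_mul, ha, hb, map_mul, hpm, hAB, eval_smul, eval_smul, eval_mul, map_mul,
      Algebra.smul_def, Algebra.smul_def]
    ring
  exact (dvd_or_dvd_of_mul_eq_prime_mul hp hab).imp (⟨a, ·, ha⟩) (⟨b, ·, hb⟩)

theorem exists_mem_not_dvd_prod_of_infinite_prime_values [CommRing K] [IsDomain K] [Algebra R K]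
    [FaithfulSMul R K] {ι : Type*} [Fintype ι] {P : ι → K[X]} {v : ι → R → R}
    (hP : ∀ i, 0 < (P i).natDegree) {S : Set R} (hS : S.Infinite)
    (hv : ∀ i, ∀ m ∈ S, algebraMap R K (v i m) = (P i).eval (algebraMap R K m))
    (hprime : ∀ i, ∀ m ∈ S, Prime (v i m)) {p : R} (hp : Prime p) :
    ∃ m ∈ S, ¬ p ∣ ∏ i, v i m := by
  by_contra! hdvd
  refine hS ((Set.finite_iUnion fun i ↦ finite_setOf_eval_dvd (hP i) hp.ne_zero).subset
    fun m hm ↦ ?_)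
  obtain ⟨i, -, hi⟩ := hp.exists_mem_finset_dvd (hdvd m hm)
  have hassoc : Associated p (v i m) := hp.associated_of_dvd (hprime i m hm) hi
  exact Set.mem_iUnion.mpr ⟨i, v i m, hassoc.symm.dvd, hv i m hm⟩

end PrimeValues

/-- If `P_1, …, P_n ∈ ℚ[X]` are totally primitive with respect to `ℤ`
(integer values witnessed by `v i : ℤ → ℤ`) and there is an infinite set `S ⊆ ℕ` such that
`P i (m)` is a prime number for every `m ∈ S` and every `i`, then each `P i` is nonconstant,
irreducible in `ℚ[X]`, with positive leading coefficient, and the product `∏ i, P i` is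
totally primitive. -/
theorem stmt17 (n : ℕ) (Pl : Fin n → ℚ[X]) (v : Fin n → ℤ → ℤ)
    (hval : ∀ i (m : ℤ), ((v i m : ℤ) : ℚ) = (Pl i).eval (m : ℚ))
    (htp : ∀ i, ∀ p : ℕ, p.Prime → ∃ m : ℤ, ¬ (p : ℤ) ∣ v i m)
    (S : Set ℕ) (hS : S.Infinite)
    (hprime : ∀ m ∈ S, ∀ i, ∃ p : ℕ, p.Prime ∧ v i (m : ℤ) = (p : ℤ)) :
    (∀ i, 0 < (Pl i).natDegree ∧ Irreducible (Pl i) ∧ 0 < (Pl i).leadingCoeff) ∧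
    (∀ p : ℕ, p.Prime → ∃ m : ℤ, ¬ (p : ℤ) ∣ ∏ i, v i m) := by
  have hS' : ((↑) '' S : Set ℤ).Infinite := hS.image Nat.cast_injective.injOn
  have hprime' : ∀ i, ∀ m ∈ ((↑) '' S : Set ℤ), Prime (v i m) := by
    rintro i _ ⟨m, hm, rfl⟩
    obtain ⟨p, hp, hvp⟩ := hprime m hm i
    exact hvp ▸ Nat.prime_iff_prime_int.mp hp
  have hdeg : ∀ i, 0 < (Pl i).natDegree := by
    intro i
    obtain ⟨m, hm⟩ := hS.nonempty
    obtain ⟨p, hp, hvp⟩ := hprime m hm i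
    obtain ⟨k, hk⟩ := htp i p hp
    refine natDegree_pos_of_eval_ne (x := (k : ℚ)) (y := ((m : ℤ) : ℚ)) ?_
    rw [← hval, ← hval, hvp, Ne, Int.cast_inj]
    exact fun heq ↦ hk heq.symm.dvd
  refine ⟨fun i ↦ ⟨hdeg i, ?_, ?_⟩, fun p hp ↦ ?_⟩
  · exact irreducible_of_infinite_prime_values (hdeg i) hS'
      fun m hm ↦ ⟨v i m, hprime' i m hm, hval i m⟩
  · refine leadingCoeff_pos_of_frequently_eval_nonneg (hdeg i) <|
      tendsto_natCast_atTop_atTop.frequently <|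
        (Nat.frequently_atTop_iff_infinite.mpr hS).mono fun m hm ↦ ?_
    obtain ⟨p, -, hvp⟩ := hprime m hm i
    rw [← Int.cast_natCast m, ← hval, hvp]
    positivity
  · obtain ⟨m, -, hm⟩ := exists_mem_not_dvd_prod_of_infinite_prime_values hdeg hS'
      (fun i m _ ↦ hval i m) hprime' (Nat.prime_iff_prime_int.mp hp)
    exact ⟨m, hm⟩
end

section
/- Let p be an odd prime number and let a be an integer with 1 < a < 4p such that gcd(a, p(p−1)) = 1. Then for every polynomial f ∈ 𝔽_p[t] (where 𝔽_p = ℤ/pℤ), the polynomial F(t) = f(t)^{4p} + t^a ∈ 𝔽_p[t] is not irreducible in 𝔽_p[t]. -/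
open Polynomial

/-!
In a cyclic extension `L/K` of even degree, a generator of the Galois group permutes the
conjugates by a cycle of even length, so it negates a square root of the discriminant, which in
characteristic other than two is therefore not a square in `K` (Stickelberger). If the degree is a
multiple of four, the discriminant of a power basis is the norm of the derivative of the minimal
polynomial at its generator.

Let `f` be nonconstant over a finite field, `F = f ^ n + X ^ a` with `n` divisible by four and by
the characteristic, and `a < n`. Then `F` has degree divisible by four and derivative
`a * X ^ (a - 1)`. If `F` were irreducible, the norm of a root would be `F(0)` over the leading
coefficient, an `n`-th power, so the norm of the derivative at that root would be a square. For
constant `f`, the polynomial has a root, as `x ↦ x ^ a` permutes the field.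
-/

section Group

variable {G : Type*} [Group G] {g : G}

lemma isCycle_mulLeft_of_forall_mem_zpowers [Nontrivial G] (hg : ∀ x, x ∈ Subgroup.zpowers g) :
    (Equiv.mulLeft g).IsCycle := by
  have hg_ne : g ≠ 1 := by
    rintro rfl
    obtain ⟨x, hx⟩ := exists_ne (1 : G)
    exact hx (by simpa using hg x)
  refine ⟨1, by simpa using hg_ne, fun x _ ↦ ?_⟩
  obtain ⟨k, rfl⟩ := hg x
  exact ⟨k, by simp⟩

lemma sign_mulLeft_of_forall_mem_zpowers [Fintype G] [DecidableEq G]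
    (hg : ∀ x, x ∈ Subgroup.zpowers g) (hG : Even (Fintype.card G)) :
    Equiv.Perm.sign (Equiv.mulLeft g) = -1 := by
  have : Nontrivial G := Fintype.one_lt_card_iff_nontrivial.1 <| by
    have := Fintype.card_pos (α := G)
    grind
  have hcycle := isCycle_mulLeft_of_forall_mem_zpowers hg
  have hsupport : (Equiv.mulLeft g).support = Finset.univ := by
    have hg_ne : g ≠ 1 := fun h ↦ hcycle.ne_one (by simp [h])
    ext x
    simpa using hg_ne
  rw [hcycle.sign, hsupport, Finset.card_univ, hG.neg_one_pow]

end Group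

section Discriminant

variable {K L : Type*} [Field K] [Field L] [Algebra K L]

/-- The matrix of all Galois conjugates of a family of elements of `L` indexed by the Galois
group itself. Its determinant is a square root of the discriminant of the family, and the
indexing makes a Galois automorphism act on the columns by a translation of the group. -/
def galoisConjugateMatrix (b : Gal(L/K) → L) : Matrix Gal(L/K) Gal(L/K) L :=
  Matrix.of fun σ τ ↦ τ (b σ)

variable [FiniteDimensional K L]

lemma map_det_galoisConjugateMatrix [DecidableEq Gal(L/K)] (b : Gal(L/K) → L) (σ : Gal(L/K)) :
    σ (galoisConjugateMatrix b).det =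
      Equiv.Perm.sign (Equiv.mulLeft σ) * (galoisConjugateMatrix b).det := by
  rw [AlgEquiv.map_det, ← Matrix.det_permute']
  rfl

variable [IsGalois K L]

lemma algebraMap_discr_eq_det_galoisConjugateMatrix_sq [DecidableEq Gal(L/K)]
    (b : Gal(L/K) → L) :
    algebraMap K L (Algebra.discr K b) = (galoisConjugateMatrix b).det ^ 2 := by
  have htrace : (algebraMap K L).mapMatrix (Algebra.traceMatrix K b) =
      galoisConjugateMatrix b * (galoisConjugateMatrix b).transpose := by
    ext σ τ
    simp [galoisConjugateMatrix, Matrix.mul_apply, Algebra.traceMatrix_apply,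
      Algebra.traceForm_apply, trace_eq_sum_automorphisms]
  rw [Algebra.discr_def, RingHom.map_det, htrace, Matrix.det_mul, Matrix.det_transpose, sq]

lemma map_det_galoisConjugateMatrix_of_isSquare_discr [DecidableEq Gal(L/K)]
    {b : Gal(L/K) → L} (hb : IsSquare (Algebra.discr K b)) (σ : Gal(L/K)) :
    σ (galoisConjugateMatrix b).det = (galoisConjugateMatrix b).det := by
  obtain ⟨s, hs⟩ := hb
  have hdet : (galoisConjugateMatrix b).det ^ 2 = algebraMap K L s ^ 2 := by
    rw [← algebraMap_discr_eq_det_galoisConjugateMatrix_sq, hs, map_mul, sq]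
  obtain h | h := sq_eq_sq_iff_eq_or_eq_neg.1 hdet <;> simp [h]

lemma discr_eq_zero_of_isSquare_of_isCyclic [DecidableEq Gal(L/K)] [IsCyclic Gal(L/K)]
    (h2 : (2 : K) ≠ 0) (heven : Even (Nat.card Gal(L/K))) {b : Gal(L/K) → L}
    (hb : IsSquare (Algebra.discr K b)) : Algebra.discr K b = 0 := by
  obtain ⟨σ, hσ⟩ := IsCyclic.exists_generator (α := Gal(L/K))
  rw [Nat.card_eq_fintype_card] at heven
  have hneg : (galoisConjugateMatrix b).det = -(galoisConjugateMatrix b).det := by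
    calc (galoisConjugateMatrix b).det = σ (galoisConjugateMatrix b).det :=
          (map_det_galoisConjugateMatrix_of_isSquare_discr hb σ).symm
      _ = -(galoisConjugateMatrix b).det := by
          rw [map_det_galoisConjugateMatrix, sign_mulLeft_of_forall_mem_zpowers hσ heven]
          simp
  have h2L : (2 : L) ≠ 0 := by
    rwa [← map_ofNat (algebraMap K L), _root_.map_ne_zero]
  have hdet : (galoisConjugateMatrix b).det = 0 := by
    have : 2 * (galoisConjugateMatrix b).det = 0 := by linear_combination hneg
    exact (mul_eq_zero.1 this).resolve_left h2L
  rw [← map_eq_zero (algebraMap K L), algebraMap_discr_eq_det_galoisConjugateMatrix_sq, hdet,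
    zero_pow two_ne_zero]

theorem not_isSquare_discr_of_isCyclic [IsCyclic Gal(L/K)] (h2 : (2 : K) ≠ 0)
    (heven : Even (Module.finrank K L)) {ι : Type*} [Fintype ι] [DecidableEq ι]
    (b : Module.Basis ι K L) : ¬ IsSquare (Algebra.discr K b) := by
  classical
  have hcard : Nat.card Gal(L/K) = Module.finrank K L := IsGalois.card_aut_eq_finrank K L
  let e : ι ≃ Gal(L/K) := Fintype.equivOfCardEq <| by
    rw [← Module.finrank_eq_card_basis b, ← hcard, Nat.card_eq_fintype_card]
  intro hsq
  apply Algebra.discr_not_zero_of_basis K b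
  rw [← Algebra.discr_reindex K b e] at hsq ⊢
  exact discr_eq_zero_of_isSquare_of_isCyclic h2 (hcard ▸ heven) hsq

lemma not_isSquare_norm_aeval_derivative_minpoly_of_isCyclic [IsCyclic Gal(L/K)]
    (h2 : (2 : K) ≠ 0) (h4 : 4 ∣ Module.finrank K L) (pb : PowerBasis K L) :
    ¬ IsSquare (Algebra.norm K (aeval pb.gen (derivative (minpoly K pb.gen)))) := by
  have heven : Even (Module.finrank K L) := even_iff_two_dvd.2 (dvd_trans (by norm_num) h4)
  have hsign : Even (Module.finrank K L * (Module.finrank K L - 1) / 2) := by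
    obtain ⟨m, hm⟩ := h4
    refine ⟨m * (Module.finrank K L - 1), Nat.div_eq_of_eq_mul_left two_pos ?_⟩
    rw [hm]
    ring
  have hdiscr := not_isSquare_discr_of_isCyclic h2 heven pb.basis
  rwa [Algebra.discr_powerBasis_eq_norm, hsign.neg_one_pow, one_mul] at hdiscr

end Discriminant

section FiniteField

variable {K : Type*} [Field K]

lemma pow_surjective_of_coprime_card_sub_one {a : ℕ} (ha : a ≠ 0)
    (hcop : a.Coprime (Nat.card K - 1)) : Function.Surjective fun x : K ↦ x ^ a := by
  intro c
  obtain rfl | hc := eq_or_ne c 0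
  · exact ⟨0, zero_pow ha⟩
  · have hcard : (Nat.card Kˣ).Coprime a := by
      rw [Nat.card_units]
      exact hcop.symm
    obtain ⟨u, hu⟩ := (powCoprime hcard).surjective (Units.mk0 c hc)
    exact ⟨u, by simpa using congrArg Units.val hu⟩

lemma not_irreducible_X_pow_sub_C_of_coprime {a : ℕ} (ha : 1 < a)
    (hcop : a.Coprime (Nat.card K - 1)) (c : K) : ¬ Irreducible (X ^ a - C c) := by
  obtain ⟨b, hb⟩ := pow_surjective_of_coprime_card_sub_one (by omega) hcop c
  exact fun hirr ↦ pow_ne_of_irreducible_X_pow_sub_C hirr dvd_rfl ha.ne' b hb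

variable [Finite K]

lemma not_irreducible_of_derivative_eq_C_mul_X_pow (h2 : (2 : K) ≠ 0) {F : K[X]}
    (h4 : 4 ∣ F.natDegree) (hcoeff : IsSquare (F.coeff 0 / F.leadingCoeff)) {c : K} {k : ℕ}
    (hF : derivative F = C c * X ^ k) : ¬ Irreducible F := by
  intro hirr
  have : Fact (Irreducible F) := ⟨hirr⟩
  let pb := AdjoinRoot.powerBasis hirr.ne_zero
  have : FiniteDimensional K (AdjoinRoot F) := pb.finite
  have : Finite (AdjoinRoot F) := Module.finite_of_finite K
  have hfinrank : Module.finrank K (AdjoinRoot F) = F.natDegree := pb.finrank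
  have heven : Even (Module.finrank K (AdjoinRoot F)) :=
    even_iff_two_dvd.2 (dvd_trans (by norm_num) (hfinrank ▸ h4))
  have hminpoly : minpoly K pb.gen = F * C F.leadingCoeff⁻¹ :=
    AdjoinRoot.minpoly_root hirr.ne_zero
  have hnorm : Algebra.norm K pb.gen = F.coeff 0 / F.leadingCoeff := by
    rw [Algebra.PowerBasis.norm_gen_eq_coeff_zero_minpoly, ← pb.finrank, heven.neg_one_pow,
      one_mul, hminpoly, coeff_mul_C, div_eq_mul_inv]
  refine not_isSquare_norm_aeval_derivative_minpoly_of_isCyclic h2 (hfinrank ▸ h4) pb ?_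
  rw [hminpoly, derivative_mul, derivative_C, mul_zero, add_zero, hF]
  simp only [map_mul, aeval_C, map_pow, aeval_X, Algebra.norm_algebraMap, hnorm]
  exact ((heven.isSquare_pow _).mul (hcoeff.pow k)).mul (heven.isSquare_pow _)

lemma not_irreducible_pow_add_X_pow_of_lt (h2 : (2 : K) ≠ 0) {n a : ℕ} (h4 : 4 ∣ n)
    (hn : (n : K) = 0) (ha : a ≠ 0) {f : K[X]} (hlt : a < n * f.natDegree) :
    ¬ Irreducible (f ^ n + X ^ a) := by
  have hlt' : (X ^ a : K[X]).natDegree < (f ^ n).natDegree := by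
    rwa [natDegree_X_pow, natDegree_pow]
  have hdeg : (f ^ n + X ^ a).natDegree = n * f.natDegree := by
    rw [natDegree_add_eq_left_of_natDegree_lt hlt', natDegree_pow]
  have hlead : (f ^ n + X ^ a).leadingCoeff = f.leadingCoeff ^ n := by
    rw [leadingCoeff_add_of_degree_lt' (degree_lt_degree hlt'), leadingCoeff_pow]
  have hcoeff : (f ^ n + X ^ a).coeff 0 = f.coeff 0 ^ n := by
    simp [coeff_zero_eq_eval_zero, ha]
  have heven : Even n := even_iff_two_dvd.2 (dvd_trans (by norm_num) h4)
  refine not_irreducible_of_derivative_eq_C_mul_X_pow h2 (hdeg ▸ h4.mul_right _) ?_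
    (c := a) (k := a - 1) ?_
  · rw [hcoeff, hlead, ← div_pow]
    exact heven.isSquare_pow _
  · simp [derivative_pow, hn]

theorem stmt18_general (h2 : (2 : K) ≠ 0) {n a : ℕ} (h4 : 4 ∣ n) (hn : (n : K) = 0)
    (ha1 : 1 < a) (ha2 : a < n) (hcop : a.Coprime (Nat.card K - 1)) (f : K[X]) :
    ¬ Irreducible (f ^ n + X ^ a) := by
  by_cases hf : f.natDegree = 0
  · obtain ⟨c, rfl⟩ := natDegree_eq_zero.1 hf
    have hconst : C c ^ n + X ^ a = X ^ a - C (-c ^ n) := by simp [add_comm]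
    rw [hconst]
    exact not_irreducible_X_pow_sub_C_of_coprime ha1 hcop _
  · exact not_irreducible_pow_add_X_pow_of_lt h2 h4 hn (by omega)
      (ha2.trans_le (Nat.le_mul_of_pos_right n (Nat.pos_of_ne_zero hf)))

end FiniteField

/-- Let `p` be an odd prime and `a` an integer with `1 < a < 4p` and
`gcd(a, p(p−1)) = 1`.  Then for every `f ∈ 𝔽_p[t]`, the polynomial `f^{4p} + t^a` is not
irreducible in `𝔽_p[t]`. -/
theorem stmt18 (p : ℕ) (hp : p.Prime) (hodd : Odd p)
    (a : ℕ) (ha1 : 1 < a) (ha2 : a < 4 * p) (hcop : Nat.Coprime a (p * (p - 1)))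
    (f : Polynomial (ZMod p)) :
    ¬ Irreducible (f ^ (4 * p) + (X : Polynomial (ZMod p)) ^ a) := by
  have : Fact p.Prime := ⟨hp⟩
  have h2 : (2 : ZMod p) ≠ 0 := Ring.two_ne_zero <| by
    rw [ZMod.ringChar_zmod_n]
    exact hodd.ne_two_of_dvd_nat dvd_rfl
  exact stmt18_general h2 (dvd_mul_right 4 p) (by simp) ha1 ha2
    (by simpa using hcop.coprime_mul_left_right) f
end
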